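/- Let φ_ε be a solution of the nonlinear eigenvalue problem (EV_ε), extended by zero to ℝⁿ \ Ω. Then the discrete gradient is uniformly bounded: ‖Δ^ε_e φ_ε(x)‖² ≤ C for all x ∈ Ω̄, with C independent of ε, where ‖Δ^ε_e φ_ε(x)‖ = (Σ_i |Δ^ε_{e_i} φ_ε(x)|²)^{1/2} and Δ^ε_{e_i} φ_ε(x) = (φ_ε(x + ε e_i) − φ_ε(x))/ε. -/

import Mathlib

open Set Filter Metric MeasureTheory Topology Asymptotics

noncomputable section

/-- Euclidean space ℝⁿ. -/
abbrev Eucl (n : ℕ) := EuclideanSpace ℝ (Fin n)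

/-- The points of the lattice `εℤⁿ`. -/
def latticePts (n : ℕ) (ε : ℝ) : Set (Eucl n) :=
  {m | ∀ i, ∃ z : ℤ, m i = ε * (z : ℝ)}

/-- The union of closed balls of radius `a` centered at the lattice points `εℤⁿ`
(the periodic holes `T_{a_ε}`). -/
def holes (n : ℕ) (ε a : ℝ) : Set (Eucl n) :=
  ⋃ m ∈ latticePts n ε, closedBall m a

/-- The Laplacian of a function on ℝⁿ (sum of its second partial derivatives). -/
def lap {n : ℕ} (u : Eucl n → ℝ) (x : Eucl n) : ℝ :=
  ∑ i, fderiv ℝ (fun y => fderiv ℝ u y (EuclideanSpace.single i 1)) x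
    (EuclideanSpace.single i 1)

/-- The harmonic capacity of a compact set, via the Dirichlet energy characterization
(which agrees with the flux of the capacitary potential through the boundary). -/
def capacity (n : ℕ) (K : Set (Eucl n)) : ℝ :=
  sInf {c | ∃ v : Eucl n → ℝ, ContDiff ℝ (⊤ : ℕ∞) v ∧ HasCompactSupport v ∧
    (∀ x ∈ K, 1 ≤ v x) ∧ c = ∫ x, ‖fderiv ℝ v x‖ ^ 2}

/-- The critical scale `a*_ε = ε^(n/(n-2))` (for `n ≥ 3`). -/
def aStar (n : ℕ) (ε : ℝ) : ℝ := ε ^ ((n : ℝ) / ((n : ℝ) - 2))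

/-- A set has smooth boundary: it is the strict sublevel set of a smooth function with
nonvanishing differential on the boundary. -/
def HasSmoothBoundary {n : ℕ} (Ω : Set (Eucl n)) : Prop :=
  ∃ f : Eucl n → ℝ, ContDiff ℝ (⊤ : ℕ∞) f ∧ Ω = {x | f x < 0} ∧
    ∀ x ∈ frontier Ω, fderiv ℝ f x ≠ 0

/-- The heat operator `H[ψ] = Δψ - ∂_t ψ` applied to a space-time function. -/
def heatOp {n : ℕ} (ψ : Eucl n → ℝ → ℝ) (x : Eucl n) (t : ℝ) : ℝ :=
  lap (fun y => ψ y t) x - deriv (fun s => ψ x s) t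

/-- `u` is a viscosity supersolution of `F[u] = 0` on `Q`: whenever a smooth test
function touches `u` from below at a point of `Q`, the operator evaluated on the test
function is `≤ 0` there. -/
def ViscSupersol {n : ℕ} (F : (Eucl n → ℝ → ℝ) → Eucl n → ℝ → ℝ)
    (Q : Set (Eucl n × ℝ)) (u : Eucl n → ℝ → ℝ) : Prop :=
  ∀ ψ : Eucl n → ℝ → ℝ, ContDiff ℝ (⊤ : ℕ∞) (fun p : Eucl n × ℝ => ψ p.1 p.2) →
    ∀ p ∈ Q, ψ p.1 p.2 = u p.1 p.2 → (∀ᶠ q in 𝓝[Q] p, ψ q.1 q.2 ≤ u q.1 q.2) →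
      F ψ p.1 p.2 ≤ 0

/-- `u` is a viscosity subsolution of `F[u] = 0` on `Q`. -/
def ViscSubsol {n : ℕ} (F : (Eucl n → ℝ → ℝ) → Eucl n → ℝ → ℝ)
    (Q : Set (Eucl n × ℝ)) (u : Eucl n → ℝ → ℝ) : Prop :=
  ∀ ψ : Eucl n → ℝ → ℝ, ContDiff ℝ (⊤ : ℕ∞) (fun p : Eucl n × ℝ => ψ p.1 p.2) →
    ∀ p ∈ Q, ψ p.1 p.2 = u p.1 p.2 → (∀ᶠ q in 𝓝[Q] p, u q.1 q.2 ≤ ψ q.1 q.2) →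
      0 ≤ F ψ p.1 p.2

/-- The highly oscillating obstacle `φ_ε = φ · χ_{T_{a_ε}}`. -/
def oscObstacle (n : ℕ) (ε a : ℝ) (φ : Eucl n → ℝ → ℝ) : Eucl n → ℝ → ℝ :=
  fun x t => (holes n ε a).indicator (fun y => φ y t) x

/-- `u` is a viscosity supersolution of the heat equation on `Q_T = Ω × (0,T]`, above the
obstacle `obst`, vanishing on the lateral boundary, with initial data `g`. -/
def IsSupersolHeatObstacle {n : ℕ} (Ω : Set (Eucl n)) (T : ℝ)
    (obst : Eucl n → ℝ → ℝ) (g : Eucl n → ℝ) (u : Eucl n → ℝ → ℝ) : Prop :=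
  ViscSupersol heatOp (Ω ×ˢ Ioc 0 T) u ∧
  (∀ x ∈ frontier Ω, ∀ t ∈ Ioc (0:ℝ) T, u x t = 0) ∧
  (∀ x ∈ Ω, ∀ t ∈ Ioc (0:ℝ) T, obst x t ≤ u x t) ∧
  (∀ x ∈ Ω, u x 0 = g x)

/-- `u` is the least viscosity supersolution of the obstacle problem. -/
def IsLeastSupersolHeatObstacle {n : ℕ} (Ω : Set (Eucl n)) (T : ℝ)
    (obst : Eucl n → ℝ → ℝ) (g : Eucl n → ℝ) (u : Eucl n → ℝ → ℝ) : Prop :=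
  IsSupersolHeatObstacle Ω T obst g u ∧
  ∀ v, IsSupersolHeatObstacle Ω T obst g v →
    ∀ x ∈ Ω, ∀ t ∈ Ioc (0:ℝ) T, u x t ≤ v x t

/-- Difference quotient of size `ε` in direction `e`. -/
def dquot {n : ℕ} (ε : ℝ) (e : Eucl n) (f : Eucl n → ℝ) (x : Eucl n) : ℝ :=
  (f (x + ε • e) - f x) / ε

/-- Norm of the discrete gradient `‖Δ^ε_e f(x)‖ = (Σ_i |Δ^ε_{e_i} f(x)|²)^{1/2}`. -/
def dgradNorm {n : ℕ} (ε : ℝ) (f : Eucl n → ℝ) (x : Eucl n) : ℝ :=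
  Real.sqrt (∑ i, (dquot ε (EuclideanSpace.single i 1) f x) ^ 2)

/-- A unit lattice direction `e ∈ ℤⁿ`, `|e| = 1`. -/
def UnitLatticeDir (n : ℕ) (e : Eucl n) : Prop :=
  e ∈ latticePts n 1 ∧ ‖e‖ = 1

/-- The `ε`-periodic corrector : `Δw = k` outside the holes of radius `a`,
`w = 1` on the holes. -/
def IsCorrector (n : ℕ) (ε a k : ℝ) (w : Eucl n → ℝ) : Prop :=
  Continuous w ∧ ContDiffOn ℝ 2 w (holes n ε a)ᶜ ∧
  (∀ x ∉ holes n ε a, lap w x = k) ∧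
  (∀ x ∈ holes n ε a, w x = 1) ∧
  (∀ m ∈ latticePts n ε, ∀ x, w (x + m) = w x)

/-- `liminf_{ε→0} inf_{x} w_ε(x)`, computed in the extended reals. -/
def liminfInf (n : ℕ) (w : ℝ → Eucl n → ℝ) : EReal :=
  Filter.liminf (fun ε => ⨅ x, ((w ε x : ℝ) : EReal)) (𝓝[>] (0:ℝ))

/-- Solution of the nonlinear eigenvalue problem (EV_ε) in the perforated domain
with holes of radius `a`, extended by zero outside `Ω_{a}`. -/
def IsEVSol (n : ℕ) (Ω : Set (Eucl n)) (ε a p : ℝ) (φ : Eucl n → ℝ) : Prop :=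
  ContinuousOn φ (closure Ω) ∧
  ContDiffOn ℝ 2 φ (Ω \ holes n ε a) ∧
  (∀ x ∈ Ω \ holes n ε a, lap φ x + φ x ^ p = 0) ∧
  (∀ x ∈ Ω \ holes n ε a, 0 < φ x) ∧
  (∀ x, x ∉ Ω \ holes n ε a → φ x = 0)

/-- Elliptic viscosity supersolution of `F[u] = 0` on `D`. -/
def ViscSupersolE {n : ℕ} (F : (Eucl n → ℝ) → Eucl n → ℝ) (D : Set (Eucl n))
    (u : Eucl n → ℝ) : Prop :=
  ∀ ψ : Eucl n → ℝ, ContDiff ℝ (⊤ : ℕ∞) ψ → ∀ x ∈ D, ψ x = u x →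
    (∀ᶠ y in 𝓝[D] x, ψ y ≤ u y) → F ψ x ≤ 0

/-- Elliptic viscosity subsolution of `F[u] = 0` on `D`. -/
def ViscSubsolE {n : ℕ} (F : (Eucl n → ℝ) → Eucl n → ℝ) (D : Set (Eucl n))
    (u : Eucl n → ℝ) : Prop :=
  ∀ ψ : Eucl n → ℝ, ContDiff ℝ (⊤ : ℕ∞) ψ → ∀ x ∈ D, ψ x = u x →
    (∀ᶠ y in 𝓝[D] x, u y ≤ ψ y) → 0 ≤ F ψ x

/-- The ε-periodic smooth cutoff `ξ` used for the initial data of (PME_ε). -/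
def PMECutoff (n : ℕ) (ε : ℝ) (ξ : Eucl n → ℝ) : Prop :=
  ContDiff ℝ (⊤ : ℕ∞) ξ ∧ (∀ x, 0 ≤ ξ x ∧ ξ x ≤ 1) ∧
  (∀ x ∈ holes n ε (aStar n ε), ξ x = 0) ∧
  (∀ x ∉ holes n ε (ε ^ (((n : ℝ) - 1) / ((n : ℝ) - 2))), ξ x = 1) ∧
  (∀ x ∈ holes n ε (ε ^ (((n : ℝ) - 1) / ((n : ℝ) - 2))) \ holes n ε (aStar n ε),
    lap ξ x = 0) ∧
  (∀ x, lap ξ x ≤ 0) ∧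
  (∀ i : Fin n, ∀ x, ξ (x + ε • EuclideanSpace.single i 1) = ξ x)

/-- The smooth initial data `g` for (PME_ε): vanishing outside `Ω` and with
nondegenerate gradient on `∂Ω`. -/
def PMEData (n : ℕ) (Ω : Set (Eucl n)) (δ₀ C : ℝ) (g : Eucl n → ℝ) : Prop :=
  ContDiff ℝ (⊤ : ℕ∞) g ∧ HasCompactSupport g ∧ tsupport g ⊆ closure Ω ∧
  ∀ x ∈ frontier Ω, δ₀ < ‖fderiv ℝ g x‖ ∧ ‖fderiv ℝ g x‖ < C

/-- `u` solves the porous medium problem (PME_ε) in the perforated domain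
`Q_{T,a*_ε} = Ω_{a*_ε} × (0,T]`, with lateral boundary value 0 and initial data `gε`. -/
def IsPMESol (n : ℕ) (Ω : Set (Eucl n)) (T ε m : ℝ) (gε : Eucl n → ℝ)
    (u : Eucl n → ℝ → ℝ) : Prop :=
  ContinuousOn (fun pr : Eucl n × ℝ => u pr.1 pr.2)
    (closure (Ω \ holes n ε (aStar n ε)) ×ˢ Icc 0 T) ∧
  (∀ x ∈ Ω \ holes n ε (aStar n ε), ∀ t ∈ Ioc (0:ℝ) T,
    lap (fun y => u y t ^ m) x - deriv (fun s => u x s) t = 0) ∧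
  (∀ x ∈ frontier (Ω \ holes n ε (aStar n ε)), ∀ t ∈ Ioc (0:ℝ) T, u x t = 0) ∧
  (∀ x ∈ Ω \ holes n ε (aStar n ε), u x 0 = gε x)


/-! ### Calculus for `lap` -/

/-- Partial derivative. -/
def pd {n : ℕ} (i : Fin n) (u : Eucl n → ℝ) (x : Eucl n) : ℝ :=
  fderiv ℝ u x (EuclideanSpace.single i 1)

lemma lap_eq_pd {n : ℕ} (u : Eucl n → ℝ) (x : Eucl n) :
    lap u x = ∑ i, pd i (pd i u) x := rfl

lemma pd_congr {n : ℕ} {i : Fin n} {u v : Eucl n → ℝ} {x : Eucl n} (h : u =ᶠ[𝓝 x] v) :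
    pd i u x = pd i v x := by
  unfold pd; rw [h.fderiv_eq]

lemma lap_congr {n : ℕ} {u v : Eucl n → ℝ} {x : Eucl n} (h : u =ᶠ[𝓝 x] v) :
    lap u x = lap v x := by
  simp only [lap_eq_pd]
  refine Finset.sum_congr rfl fun i _ => pd_congr ?_
  filter_upwards [h.eventuallyEq_nhds] with y hy using pd_congr hy

lemma pd_differentiable {n : ℕ} {u : Eucl n → ℝ} {x : Eucl n} (hu : ContDiffAt ℝ 2 u x)
    (i : Fin n) : DifferentiableAt ℝ (pd i u) x := by
  have h1 : ContDiffAt ℝ 1 (fderiv ℝ u) x := hu.fderiv_right (by norm_num)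
  have h2 : DifferentiableAt ℝ (fderiv ℝ u) x := h1.differentiableAt (by norm_num)
  exact h2.clm_apply (differentiableAt_const _)

lemma ev_differentiable {n : ℕ} {u : Eucl n → ℝ} {x : Eucl n} (hu : ContDiffAt ℝ 2 u x) :
    ∀ᶠ y in 𝓝 x, DifferentiableAt ℝ u y := by
  filter_upwards [hu.eventually (by simp)] with y hy
  exact hy.differentiableAt (by norm_num)

lemma lap_add {n : ℕ} {u v : Eucl n → ℝ} {x : Eucl n} (hu : ContDiffAt ℝ 2 u x)
    (hv : ContDiffAt ℝ 2 v x) : lap (fun y => u y + v y) x = lap u x + lap v x := by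
  simp only [lap_eq_pd, ← Finset.sum_add_distrib]
  refine Finset.sum_congr rfl fun i _ => ?_
  have h : pd i (fun y => u y + v y) =ᶠ[𝓝 x] fun y => pd i u y + pd i v y := by
    filter_upwards [ev_differentiable hu, ev_differentiable hv] with y h1 h2
    simp only [pd]
    rw [fderiv_fun_add h1 h2]; rfl
  rw [pd_congr h]
  change fderiv ℝ (fun y => pd i u y + pd i v y) x _ = _
  rw [fderiv_fun_add (pd_differentiable hu i) (pd_differentiable hv i)]; rfl

lemma lap_const_mul {n : ℕ} {u : Eucl n → ℝ} {x : Eucl n} (c : ℝ) (hu : ContDiffAt ℝ 2 u x) :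
    lap (fun y => c * u y) x = c * lap u x := by
  simp only [lap_eq_pd, Finset.mul_sum]
  refine Finset.sum_congr rfl fun i _ => ?_
  have h : pd i (fun y => c * u y) =ᶠ[𝓝 x] fun y => c * pd i u y := by
    filter_upwards [ev_differentiable hu] with y h1
    simp only [pd]
    rw [fderiv_const_mul h1]; rfl
  rw [pd_congr h]
  change fderiv ℝ (fun y => c * pd i u y) x _ = _
  rw [fderiv_const_mul (pd_differentiable hu i)]; rfl

lemma lap_const {n : ℕ} (c : ℝ) (x : Eucl n) : lap (fun _ : Eucl n => c) x = 0 := by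
  simp [lap]

lemma lap_sub {n : ℕ} {u v : Eucl n → ℝ} {x : Eucl n} (hu : ContDiffAt ℝ 2 u x)
    (hv : ContDiffAt ℝ 2 v x) : lap (fun y => u y - v y) x = lap u x - lap v x := by
  have h : (fun y => u y - v y) = fun y => u y + (-1) * v y := by ext y; ring
  rw [h, lap_add hu (contDiffAt_const.mul hv), lap_const_mul _ hv]; ring

lemma lap_translate {n : ℕ} (u : Eucl n → ℝ) (v x : Eucl n) :
    lap (fun y => u (y + v)) x = lap u (x + v) := by
  have h : ∀ (i : Fin n) (u : Eucl n → ℝ) , pd i (fun y => u (y + v)) = fun y => pd i u (y + v) := by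
    intro i u; ext y
    simp only [pd]
    rw [fderiv_comp_add_right]
  simp only [lap_eq_pd]
  refine Finset.sum_congr rfl fun i _ => ?_
  rw [h i u, h i (pd i u)]

/-- Chain rule for the Laplacian. -/
lemma lap_comp {n : ℕ} {u : Eucl n → ℝ} {x : Eucl n} (hu : ContDiffAt ℝ 2 u x)
    {F F' : ℝ → ℝ} {F'' : ℝ} (hF : ∀ᶠ z in 𝓝 (u x), HasDerivAt F (F' z) z)
    (hF' : HasDerivAt F' F'' (u x)) :
    lap (fun y => F (u y)) x = F' (u x) * lap u x + F'' * ∑ i, (pd i u x) ^ 2 := by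
  simp only [lap_eq_pd, Finset.mul_sum, ← Finset.sum_add_distrib]
  refine Finset.sum_congr rfl fun i _ => ?_
  have h : pd i (fun y => F (u y)) =ᶠ[𝓝 x] fun y => F' (u y) * pd i u y := by
    filter_upwards [ev_differentiable hu, hu.continuousAt.eventually hF] with y h1 h2
    simp only [pd]
    have := (h2.comp_hasFDerivAt y h1.hasFDerivAt).fderiv
    rw [show (fun y => F (u y)) = F ∘ u from rfl, this]; rfl
  rw [pd_congr h]
  have hd : DifferentiableAt ℝ u x := hu.differentiableAt (by norm_num)
  have h3 := (hF'.comp_hasFDerivAt x hd.hasFDerivAt).mul (pd_differentiable hu i).hasFDerivAt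
  have h4 : fderiv ℝ (fun y => F' (u y) * pd i u y) x = _ := h3.fderiv
  unfold pd at h4 ⊢
  rw [h4]
  simp only [Function.comp, add_apply, smul_apply,
    smul_eq_mul]
  ring

/-- Laplacian of a separable sum. -/
lemma hasFDerivAt_sep {n : ℕ} {g g' : ℝ → ℝ} (hg : ∀ t, HasDerivAt g (g' t) t) (x : Eucl n) 
    (j : Fin n) : pd j (fun y : Eucl n => ∑ i, g (y i)) x = g' (x j) := by
  have h : ∀ i ∈ (Finset.univ : Finset (Fin n)), HasFDerivAt (fun y : Eucl n => g (y i))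
      (g' (x i) • (EuclideanSpace.proj i : Eucl n →L[ℝ] ℝ)) x := by
    intro i _
    exact (hg (x i)).comp_hasFDerivAt x (EuclideanSpace.proj i : Eucl n →L[ℝ] ℝ).hasFDerivAt
  have h2 := (HasFDerivAt.fun_sum h).fderiv
  unfold pd
  rw [h2]
  simp

lemma lap_sep {n : ℕ} {g g' g'' : ℝ → ℝ} (hg : ∀ t, HasDerivAt g (g' t) t)
    (hg' : ∀ t, HasDerivAt g' (g'' t) t) (x : Eucl n) :
    lap (fun y : Eucl n => ∑ i, g (y i)) x = ∑ i, g'' (x i) := by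
  rw [lap_eq_pd]
  refine Finset.sum_congr rfl fun j _ => ?_
  have : pd j (fun y : Eucl n => ∑ i, g (y i)) = fun y => g' (y j) := by
    ext y; exact hasFDerivAt_sep hg y j
  rw [this]
  have h := (hg' (x j)).comp_hasFDerivAt x (EuclideanSpace.proj j : Eucl n →L[ℝ] ℝ).hasFDerivAt
  have h2 : fderiv ℝ (fun y : Eucl n => g' (y j)) x = _ := h.fderiv
  unfold pd
  rw [h2]
  simp

/-- At a local maximum the Laplacian is nonpositive. -/
lemma lap_nonpos_of_isLocalMax {n : ℕ} {u : Eucl n → ℝ} {x : Eucl n}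
    (hu : ContDiffAt ℝ 2 u x) (hx : IsLocalMax u x) : lap u x ≤ 0 := by
  rw [lap_eq_pd]
  refine Finset.sum_nonpos fun i _ => ?_
  by_contra! hpos
  set e : Eucl n := EuclideanSpace.single i 1 with he
  let l : ℝ → Eucl n := fun t => x + t • e
  have hl : ∀ t, HasDerivAt l e t := by
    intro t
    have h := ((hasDerivAt_id t).smul_const e).const_add x
    rw [one_smul] at h
    exact h
  have hlc : Continuous l := by fun_prop
  have hl0 : l 0 = x := by simp [l]
  have hlt : Tendsto l (𝓝 0) (𝓝 x) := by
    have := hlc.tendsto 0; rwa [hl0] at this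
  have h1 : ∀ᶠ t in 𝓝 (0:ℝ), HasDerivAt (fun t => u (l t)) (pd i u (l t)) t := by
    filter_upwards [hlt.eventually (ev_differentiable hu)] with t ht
    exact ht.hasFDerivAt.comp_hasDerivAt t (hl t)
  have h1' : deriv (fun t => u (l t)) =ᶠ[𝓝 0] fun t => pd i u (l t) := by
    filter_upwards [h1] with t ht using ht.deriv
  have hd : HasFDerivAt (pd i u) (fderiv ℝ (pd i u) x) (l 0) := by
    rw [hl0]; exact (pd_differentiable hu i).hasFDerivAt
  have h2 : HasDerivAt (fun t => pd i u (l t)) (pd i (pd i u) x) 0 :=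
    hd.comp_hasDerivAt 0 (hl 0)
  have h3 : deriv (deriv (fun t => u (l t))) 0 = pd i (pd i u) x := by
    rw [h1'.deriv_eq, h2.deriv]
  have hmax : IsLocalMax (fun t => u (l t)) 0 := by
    have : ∀ᶠ t in 𝓝 (0:ℝ), u (l t) ≤ u x := hlt.eventually hx
    filter_upwards [this] with t ht
    rw [hl0]; exact ht
  have hmin : IsLocalMin (fun t => u (l t)) 0 := by
    apply isLocalMin_of_deriv_deriv_pos
    · rw [h3]; exact hpos
    · exact hmax.deriv_eq_zero
    · have := h1.self_of_nhds
      exact this.continuousAt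
  have hc : (fun t => u (l t)) =ᶠ[𝓝 0] fun _ => u (l 0) := by
    filter_upwards [hmax, hmin] with t h4 h5
    exact le_antisymm h4 h5
  have : deriv (deriv (fun t => u (l t))) 0 = 0 := by
    rw [hc.deriv.deriv_eq]; simp
  rw [h3] at this
  linarith

lemma lap_le_of_touch {n : ℕ} {u v : Eucl n → ℝ} {x : Eucl n}
    (hu : ContDiffAt ℝ 2 u x) (hv : ContDiffAt ℝ 2 v x)
    (h : IsLocalMax (fun y => u y - v y) x) : lap u x ≤ lap v x := by
  have := lap_nonpos_of_isLocalMax (hu.sub hv) h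
  rw [lap_sub hu hv] at this
  linarith

/-! ### The hole function -/

/-- The periodic function vanishing on the lattice. -/
def Sf (n : ℕ) (ε : ℝ) (x : Eucl n) : ℝ := ∑ i, Real.sin (Real.pi / ε * x i) ^ 2

lemma Sf_nonneg (n : ℕ) (ε : ℝ) (x : Eucl n) : 0 ≤ Sf n ε x :=
  Finset.sum_nonneg fun _ _ => sq_nonneg _

lemma Sf_le (n : ℕ) (ε : ℝ) (x : Eucl n) : Sf n ε x ≤ n := by
  have : Sf n ε x ≤ ∑ _i : Fin n, (1:ℝ) :=
    Finset.sum_le_sum fun _ _ => Real.sin_sq_le_one _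
  simpa using this

lemma Sf_contDiff (n : ℕ) (ε : ℝ) : ContDiff ℝ 2 (Sf n ε) := by
  unfold Sf
  refine ContDiff.sum fun i _ => ?_
  refine ContDiff.pow ?_ 2
  refine Real.contDiff_sin.comp ?_
  exact contDiff_const.mul (EuclideanSpace.proj i : Eucl n →L[ℝ] ℝ).contDiff

lemma sinsq_deriv (b t : ℝ) : HasDerivAt (fun t => Real.sin (b * t) ^ 2)
    (2 * b * (Real.sin (b * t) * Real.cos (b * t))) t := by
  have h : HasDerivAt (fun t => b * t) b t := by simpa using (hasDerivAt_id t).const_mul b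
  have := (h.sin).pow 2
  refine HasDerivAt.congr_deriv this ?_
  norm_num; ring

lemma sinsq_deriv2 (b t : ℝ) : HasDerivAt (fun t => 2 * b * (Real.sin (b * t) * Real.cos (b * t)))
    (2 * b ^ 2 * (1 - 2 * Real.sin (b * t) ^ 2)) t := by
  have h : HasDerivAt (fun t => b * t) b t := by simpa using (hasDerivAt_id t).const_mul b
  have := ((h.sin).mul h.cos).const_mul (2 * b)
  refine HasDerivAt.congr_deriv this ?_
  have := Real.cos_sq' (b * t)
  linear_combination (-1 * -2 * b ^ 2) * this

lemma lap_Sf (n : ℕ) (ε : ℝ) (x : Eucl n) :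
    lap (Sf n ε) x = 2 * (Real.pi / ε) ^ 2 * (n - 2 * Sf n ε x) := by
  have := lap_sep (n := n) (sinsq_deriv (Real.pi / ε)) (sinsq_deriv2 (Real.pi / ε)) x
  unfold Sf
  rw [this, ← Finset.mul_sum, Finset.sum_sub_distrib, ← Finset.mul_sum]
  simp

lemma grad_Sf (n : ℕ) (ε : ℝ) (x : Eucl n) :
    ∑ i, (pd i (Sf n ε) x) ^ 2 ≤ 4 * (Real.pi / ε) ^ 2 * Sf n ε x := by
  conv_rhs => unfold Sf
  rw [Finset.mul_sum]
  refine Finset.sum_le_sum fun i _ => ?_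
  have := hasFDerivAt_sep (n := n) (sinsq_deriv (Real.pi / ε)) x i
  unfold Sf
  rw [this]
  have h1 := Real.cos_sq_le_one (Real.pi / ε * x i)
  have h2 : 0 ≤ 4 * (Real.pi / ε) ^ 2 * Real.sin (Real.pi / ε * x i) ^ 2 := by positivity
  nlinarith

lemma latt_sin {ε : ℝ} (hε : 0 < ε) (t : ℝ) (z : ℤ) :
    Real.sin (Real.pi / ε * t) ^ 2 = Real.sin (Real.pi / ε * (t - ε * z)) ^ 2 := by
  have : Real.pi / ε * (t - ε * z) = Real.pi / ε * t - z * Real.pi := by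
    field_simp
  rw [this, Real.sin_sub_int_mul_pi, mul_pow]
  have : ((-1:ℝ) ^ z) ^ 2 = 1 := by
    rw [← zpow_natCast, ← zpow_mul]
    exact (even_two.mul_left z).neg_one_zpow
  rw [this, one_mul]

/-- Upper bound in terms of the distance to a lattice point. -/
lemma Sf_le_dist {n : ℕ} {ε : ℝ} (hε : 0 < ε) {x m : Eucl n} (hm : m ∈ latticePts n ε) :
    Sf n ε x ≤ (Real.pi / ε) ^ 2 * dist x m ^ 2 := by
  rw [EuclideanSpace.dist_eq, Real.sq_sqrt (Finset.sum_nonneg fun _ _ => sq_nonneg _),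
    Finset.mul_sum]
  refine Finset.sum_le_sum fun i _ => ?_
  obtain ⟨z, hz⟩ := hm i
  rw [latt_sin hε _ z, ← hz, Real.dist_eq, sq_abs, ← mul_pow]
  have := Real.abs_sin_le_abs (x := Real.pi / ε * (x i - m i))
  exact sq_le_sq.mpr this

/-- Off the holes, `Sf` is bounded below. -/
lemma Sf_ge {n : ℕ} {ε a : ℝ} (hε : 0 < ε) (ha : 0 < a) {x : Eucl n} (hx : x ∉ holes n ε a) :
    a ^ 2 / ε ^ 2 ≤ Sf n ε x := by
  let m : Eucl n := WithLp.toLp 2 fun i => ε * (round (x i / ε) : ℝ)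
  have hm : m ∈ latticePts n ε := fun i => ⟨round (x i / ε), rfl⟩
  have hd : a < dist x m := by
    by_contra! h
    exact hx (mem_iUnion₂.mpr ⟨m, hm, h⟩)
  have h1 : (1 / ε) ^ 2 * dist x m ^ 2 ≤ Sf n ε x := by
    rw [EuclideanSpace.dist_eq, Real.sq_sqrt (Finset.sum_nonneg fun _ _ => sq_nonneg _),
      Finset.mul_sum]
    refine Finset.sum_le_sum fun i _ => ?_
    rw [latt_sin hε _ (round (x i / ε)), Real.dist_eq, sq_abs, ← mul_pow]
    change (1 / ε * (x i - ε * (round (x i / ε) : ℝ))) ^ 2 ≤ _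
    have h2 := abs_sub_round (x i / ε)
    have h3 : Real.pi / ε * (x i - ε * (round (x i / ε) : ℝ))
        = Real.pi * (x i / ε - round (x i / ε)) := by field_simp
    have h4 : 1 / ε * (x i - ε * (round (x i / ε) : ℝ))
        = (x i / ε - round (x i / ε)) := by field_simp
    rw [h3, h4]
    have hpi := Real.pi_pos
    have h5 := Real.mul_abs_le_abs_sin (x := Real.pi * (x i / ε - round (x i / ε))) (by
      rw [abs_mul, abs_of_pos hpi]; nlinarith)
    rw [abs_mul, abs_of_pos hpi] at h5
    have h6 : 2 / Real.pi * (Real.pi * |x i / ε - round (x i / ε)|)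
      = 2 * |x i / ε - round (x i / ε)| := by field_simp
    rw [h6] at h5
    apply sq_le_sq.mpr
    linarith [abs_nonneg (x i / ε - round (x i / ε))]
  refine le_trans ?_ h1
  rw [div_pow, one_pow, div_eq_inv_mul, one_div]
  gcongr

/-- The profile. -/
def chi (e s : ℝ) (z : ℝ) : ℝ := z ^ (-e) + 8 * e / s * z ^ (-s)

/-- The hole function. -/
def Gf (n : ℕ) (ε : ℝ) (x : Eucl n) : ℝ :=
  ε ^ 2 * chi (((n:ℝ) - 2) / 2) (((n:ℝ) - 2) / 2 - 1 / 4) (Sf n ε x)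

lemma chi_deriv (e s z : ℝ) (hs : s ≠ 0) (hz : 0 < z) :
    HasDerivAt (chi e s) (-e * z ^ (-e - 1) - 8 * e * z ^ (-s - 1)) z := by
  have h1 := Real.hasDerivAt_rpow_const (x := z) (p := -e) (Or.inl hz.ne')
  have h2 := (Real.hasDerivAt_rpow_const (x := z) (p := -s) (Or.inl hz.ne')).const_mul (8 * e / s)
  have := h1.add h2
  refine HasDerivAt.congr_deriv this ?_
  field_simp
  ring

lemma chi_deriv2 (e s z : ℝ) (hz : 0 < z) :
    HasDerivAt (fun z => -e * z ^ (-e - 1) - 8 * e * z ^ (-s - 1))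
     (e * (e + 1) * z ^ (-e - 2) + 8 * e * (s + 1) * z ^ (-s - 2)) z := by
  have h1 := (Real.hasDerivAt_rpow_const (x := z) (p := -e - 1) (Or.inl hz.ne')).const_mul (-e)
  have h2 := (Real.hasDerivAt_rpow_const (x := z) (p := -s - 1) (Or.inl hz.ne')).const_mul (8 * e)
  have := h1.sub h2
  refine HasDerivAt.congr_deriv this ?_
  rw [show -e - 1 - 1 = -e - 2 by ring, show -s - 1 - 1 = -s - 2 by ring]
  ring

lemma chi_ineq (n e s z : ℝ) (hn : 1 ≤ n) (he : 1 / 2 ≤ e) (hne : n = 2 * e + 2) (hs : s = e - 1 / 4)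
    (hz : 0 < z) (hzn : z ≤ n) :
    (-e * z ^ (-e - 1) - 8 * e * z ^ (-s - 1)) * (2 * n - 4 * z) +
      4 * (e * (e + 1) * z ^ (-e - 2) + 8 * e * (s + 1) * z ^ (-s - 2)) * z ≤
    e * 16 ^ (s + 1) * (45 * n) - s * chi e s z := by
  have hs0 : 0 < s := by linarith
  set X := z ^ (-s - 1) with hX
  have hXpos : 0 < X := Real.rpow_pos_of_pos hz _
  have hz34 : 0 < z ^ (3 / 4 : ℝ) := Real.rpow_pos_of_pos hz _
  have e1 : z ^ (-s) = X * z := by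
    rw [hX, ← Real.rpow_add_one hz.ne']; congr 1; ring
  have e2 : z ^ (-s - 2) * z = X := by
    rw [hX, ← Real.rpow_add_one hz.ne']; congr 1; ring
  have e3 : z ^ (-e) = X * z ^ (3 / 4 : ℝ) := by
    rw [hX, ← Real.rpow_add hz]; congr 1; rw [hs]; ring
  have e4 : z ^ (-e - 1) * z = X * z ^ (3 / 4 : ℝ) := by
    rw [← e3, ← Real.rpow_add_one hz.ne']; congr 1; ring
  have e5 : z ^ (-e - 2) * z = z ^ (-e - 1) := by
    rw [← Real.rpow_add_one hz.ne']; congr 1; ring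
  have hL : (-e * z ^ (-e - 1) - 8 * e * X) * (2 * n - 4 * z) +
      4 * (e * (e + 1) * z ^ (-e - 2) + 8 * e * (s + 1) * z ^ (-s - 2)) * z =
      X * (4 * e * z ^ (3 / 4 : ℝ) + 32 * e * z - 8 * e) := by
    have : (-e * z ^ (-e - 1) - 8 * e * X) * (2 * n - 4 * z) +
      4 * (e * (e + 1) * z ^ (-e - 2) + 8 * e * (s + 1) * z ^ (-s - 2)) * z =
      -2 * n * e * z ^ (-e - 1) + 4 * e * (z ^ (-e - 1) * z) - 16 * n * e * X + 32 * e * X * z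
      + 4 * e * (e + 1) * (z ^ (-e - 2) * z) + 32 * e * (s + 1) * (z ^ (-s - 2) * z) := by ring
    rw [this, e2, e4, e5, hs, hne]; ring
  have hR : s * chi e s z = X * (s * z ^ (3 / 4 : ℝ) + 8 * e * z) := by
    unfold chi; rw [e1, e3]; field_simp
  rw [hL, hR]
  suffices h : e * X * (5 * z ^ (3 / 4 : ℝ) + 40 * z - 8) ≤ e * 16 ^ (s + 1) * (45 * n) by
    have : X * z ^ (3 / 4 : ℝ) * s ≤ X * z ^ (3 / 4 : ℝ) * e := by
      apply mul_le_mul_of_nonneg_left <;> [linarith; positivity]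
    nlinarith
  have hpos : 0 ≤ e * (16:ℝ) ^ (s + 1) * (45 * n) := by positivity
  rcases le_or_gt z (1 / 16) with h | h
  · have h8 : z ^ (3 / 4 : ℝ) ≤ 1 / 8 := by
      calc z ^ (3 / 4 : ℝ) ≤ (1 / 16 : ℝ) ^ (3 / 4 : ℝ) := Real.rpow_le_rpow hz.le h (by norm_num)
        _ = 1 / 8 := by
          rw [show (1 / 16 : ℝ) = (1 / 2 : ℝ) ^ (4 : ℝ) by norm_num, ← Real.rpow_mul (by norm_num)]
          norm_num
    have : e * X * (5 * z ^ (3 / 4 : ℝ) + 40 * z - 8) ≤ 0 := by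
      apply mul_nonpos_of_nonneg_of_nonpos <;> [positivity; linarith]
    linarith
  · have h1 : X ≤ 16 ^ (s + 1) := by
      have : X ≤ (1 / 16 : ℝ) ^ (-s - 1) :=
        Real.rpow_le_rpow_of_nonpos (by norm_num) h.le (by linarith)
      rw [one_div, Real.inv_rpow (by norm_num), ← Real.rpow_neg (by norm_num)] at this
      convert this using 2; ring
    have h2 : z ^ (3 / 4 : ℝ) ≤ n := by
      calc z ^ (3 / 4 : ℝ) ≤ n ^ (3 / 4 : ℝ) := Real.rpow_le_rpow hz.le hzn (by norm_num)
        _ ≤ n ^ (1 : ℝ) := Real.rpow_le_rpow_of_exponent_le hn (by norm_num)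
        _ = n := Real.rpow_one n
    calc e * X * (5 * z ^ (3 / 4 : ℝ) + 40 * z - 8) ≤ e * X * (45 * n) := by
          apply mul_le_mul_of_nonneg_left <;> [linarith; positivity]
      _ ≤ _ := by gcongr

lemma chi_pos {e s z : ℝ} (he : 0 < e) (hs : 0 < s) (hz : 0 < z) : 0 < chi e s z := by
  unfold chi; positivity

lemma Gf_contDiffAt {n : ℕ} {ε : ℝ} {x : Eucl n} (hS : 0 < Sf n ε x) :
    ContDiffAt ℝ 2 (Gf n ε) x := by
  unfold Gf chi
  have h := (Sf_contDiff n ε).contDiffAt (x := x)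
  exact contDiffAt_const.mul ((h.rpow_const_of_ne hS.ne').add
    (contDiffAt_const.mul (h.rpow_const_of_ne hS.ne')))

lemma aStar_pow {n : ℕ} (hn : 3 ≤ n) {ε : ℝ} (hε : 0 < ε) :
    (aStar n ε ^ 2 / ε ^ 2) ^ (-(((n:ℝ) - 2) / 2)) = (ε ^ 2)⁻¹ := by
  have hn' : (3:ℝ) ≤ n := by exact_mod_cast hn
  have h2 : (n:ℝ) - 2 ≠ 0 := by linarith
  have : aStar n ε ^ 2 / ε ^ 2 = ε ^ (4 / ((n:ℝ) - 2)) := by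
    unfold aStar
    rw [← Real.rpow_natCast, ← Real.rpow_natCast, ← Real.rpow_mul hε.le, ← Real.rpow_sub hε]
    congr 1; push_cast; field_simp; ring
  rw [this, ← Real.rpow_mul hε.le, ← Real.rpow_natCast, ← Real.rpow_neg hε.le]
  congr 1; push_cast; field_simp; norm_num

/-- All the properties of the hole function. -/
lemma Gf_props (n : ℕ) (hn : 3 ≤ n) : ∃ c₀ > 0, ∃ c₂ > 0, ∃ C₁ > 0, ∃ C₂ > 0,
    ∀ ε ∈ Ioo (0:ℝ) 1,
      (∀ x, 0 < Sf n ε x → 0 < Gf n ε x) ∧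
      (∀ x, 0 < Sf n ε x → x ∈ holes n ε (aStar n ε) → c₀ ≤ Gf n ε x) ∧
      (∀ x, x ∉ holes n ε (aStar n ε) → Gf n ε x ≤ C₁) ∧
      (∀ x, 0 < Sf n ε x → lap (Gf n ε) x ≤ C₂ - c₂ * (Gf n ε x / ε ^ 2)) := by
  have hn' : (3:ℝ) ≤ n := by exact_mod_cast hn
  set e : ℝ := ((n:ℝ) - 2) / 2 with he
  set s : ℝ := e - 1 / 4 with hs
  have he2 : 1 / 2 ≤ e := by rw [he]; linarith
  have hs0 : 0 < s := by rw [hs]; linarith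
  have hpi := Real.pi_pos
  have ha : ∀ ε ∈ Ioo (0:ℝ) 1, 0 < aStar n ε := fun ε hε => Real.rpow_pos_of_pos hε.1 _
  refine ⟨(Real.pi ^ 2) ^ (-e), by positivity, Real.pi ^ 2 * s, by positivity,
    1 + 8 * e / s * n, by positivity, Real.pi ^ 2 * (e * 16 ^ (s + 1) * (45 * n)), by positivity, ?_⟩
  intro ε hε
  have hε0 := hε.1
  refine ⟨fun x hx => ?_, fun x hx hx' => ?_, fun x hx => ?_, fun x hx => ?_⟩
  · have := chi_pos (by linarith : 0 < e) hs0 hx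
    unfold Gf; positivity
  · obtain ⟨m, hm, hd⟩ := mem_iUnion₂.mp hx'
    have h1 := Sf_le_dist hε0 (x := x) hm
    have h2 : Sf n ε x ≤ Real.pi ^ 2 * (aStar n ε ^ 2 / ε ^ 2) := by
      refine h1.trans ?_
      rw [div_pow, div_mul_eq_mul_div, mul_div_assoc]
      have : dist x m ≤ aStar n ε := hd
      gcongr
    have h3 : (Real.pi ^ 2) ^ (-e) * (ε ^ 2)⁻¹ ≤ Sf n ε x ^ (-e) := by
      rw [← aStar_pow hn hε0, ← he, ← Real.mul_rpow (by positivity) (by positivity)]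
      exact Real.rpow_le_rpow_of_nonpos hx h2 (by linarith)
    have h4 : 0 < Sf n ε x ^ (-s) := Real.rpow_pos_of_pos hx _
    have h5 : Sf n ε x ^ (-e) ≤ chi e s (Sf n ε x) := by
      unfold chi
      have : 0 ≤ 8 * e / s * Sf n ε x ^ (-s) := by positivity
      linarith
    calc (Real.pi ^ 2) ^ (-e) = ε ^ 2 * ((Real.pi ^ 2) ^ (-e) * (ε ^ 2)⁻¹) := by
          field_simp
      _ ≤ ε ^ 2 * chi e s (Sf n ε x) := by
          gcongr; exact h3.trans h5
  · have h1 := Sf_ge hε0 (ha ε hε) hx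
    have h0 : 0 < aStar n ε ^ 2 / ε ^ 2 := by have := ha ε hε; positivity
    have hS : 0 < Sf n ε x := h0.trans_le h1
    have h2 : Sf n ε x ^ (-e) ≤ (ε ^ 2)⁻¹ := by
      rw [← aStar_pow hn hε0, ← he]
      exact Real.rpow_le_rpow_of_nonpos h0 h1 (by linarith)
    have h3 : Sf n ε x ^ (-s) ≤ (ε ^ 2)⁻¹ * n := by
      have : Sf n ε x ^ (-s) = Sf n ε x ^ (-e) * Sf n ε x ^ (1 / 4 : ℝ) := by
        rw [← Real.rpow_add hS]; congr 1; rw [hs]; ring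
      rw [this]
      have h4 : Sf n ε x ^ (1 / 4 : ℝ) ≤ n := by
        calc Sf n ε x ^ (1 / 4 : ℝ) ≤ (n:ℝ) ^ (1 / 4 : ℝ) :=
              Real.rpow_le_rpow hS.le (Sf_le n ε x) (by norm_num)
          _ ≤ (n:ℝ) ^ (1 : ℝ) := Real.rpow_le_rpow_of_exponent_le (by linarith) (by norm_num)
          _ = n := Real.rpow_one _
      gcongr
    calc Gf n ε x = ε ^ 2 * (Sf n ε x ^ (-e) + 8 * e / s * Sf n ε x ^ (-s)) := rfl
      _ ≤ ε ^ 2 * ((ε ^ 2)⁻¹ + 8 * e / s * ((ε ^ 2)⁻¹ * n)) := by gcongr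
      _ = _ := by field_simp
  · have hcd := (Sf_contDiff n ε).contDiffAt (x := x)
    have hF : ∀ᶠ z in 𝓝 (Sf n ε x), HasDerivAt (chi e s)
        (-e * z ^ (-e - 1) - 8 * e * z ^ (-s - 1)) z := by
      filter_upwards [lt_mem_nhds hx] with z hz using chi_deriv e s z hs0.ne' hz
    have h1 := lap_comp hcd hF (chi_deriv2 e s _ hx)
    have hchi : ContDiffAt ℝ 2 (fun y => chi e s (Sf n ε y)) x := by
      unfold chi
      exact ((hcd.rpow_const_of_ne hx.ne').add
        (contDiffAt_const.mul (hcd.rpow_const_of_ne hx.ne')))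
    have h2 : lap (Gf n ε) x = ε ^ 2 * lap (fun y => chi e s (Sf n ε y)) x :=
      lap_const_mul (ε ^ 2) hchi
    have h3 := chi_ineq n e s (Sf n ε x) (by linarith) he2 (by rw [he]; ring) hs hx (Sf_le n ε x)
    have h4 := grad_Sf n ε x
    rw [h2, h1, lap_Sf]
    set z := Sf n ε x with hz
    set A := (-e * z ^ (-e - 1) - 8 * e * z ^ (-s - 1))
    have hB : 0 ≤ (e * (e + 1) * z ^ (-e - 2) + 8 * e * (s + 1) * z ^ (-s - 2)) := by
      have := Real.rpow_pos_of_pos hx (-e - 2)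
      have := Real.rpow_pos_of_pos hx (-s - 2)
      positivity
    set B := (e * (e + 1) * z ^ (-e - 2) + 8 * e * (s + 1) * z ^ (-s - 2))
    have hG : Gf n ε x / ε ^ 2 = chi e s z := by
      change ε ^ 2 * chi e s z / ε ^ 2 = _
      field_simp
    rw [hG]
    calc ε ^ 2 * (A * (2 * (Real.pi / ε) ^ 2 * (n - 2 * z)) + B * ∑ i, pd i (Sf n ε) x ^ 2)
        ≤ ε ^ 2 * (A * (2 * (Real.pi / ε) ^ 2 * (n - 2 * z)) +
          B * (4 * (Real.pi / ε) ^ 2 * z)) := by gcongr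
      _ = Real.pi ^ 2 * (A * (2 * n - 4 * z) + 4 * B * z) := by field_simp; ring
      _ ≤ Real.pi ^ 2 * (e * 16 ^ (s + 1) * (45 * n) - s * chi e s z) := by gcongr
      _ = _ := by ring

/-! ### Domain data and basic properties of solutions -/

/-- Quantitative data of the domain. -/
structure Dom {n : ℕ} (Ω : Set (Eucl n)) (f : Eucl n → ℝ) (R c₀ Lf Dm L : ℝ) : Prop where
  opn : IsOpen Ω
  bdd : Ω ⊆ closedBall 0 R
  cpt : IsCompact (closure Ω)
  cd : ContDiff ℝ 2 f
  mem : ∀ x, x ∈ Ω ↔ f x < 0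
  cl : ∀ x ∈ closure Ω, f x ≤ 0
  c₀pos : 0 < c₀
  Lfpos : 0 < Lf
  Dmpos : 0 < Dm
  Lpos : 0 < L
  le_Dm : ∀ x ∈ closure Ω, -f x ≤ Dm
  lapf : ∀ x ∈ closure Ω, |lap f x| ≤ Lf
  grad : ∀ x ∈ closure Ω, 2 * c₀ ≤ ∑ i, (pd i f x) ^ 2 - f x
  lip : ∀ x ∉ Ω, ∀ y ∈ Ω, dist x y ≤ 1 → -f y ≤ L * dist x y

lemma pd_continuous {n : ℕ} {f : Eucl n → ℝ} (hf : ContDiff ℝ 1 f) (i : Fin n) :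
    Continuous (pd i f) :=
  (hf.continuous_fderiv (by norm_num)).clm_apply continuous_const

lemma pd_contDiff {n : ℕ} {f : Eucl n → ℝ} (hf : ContDiff ℝ 2 f) (i : Fin n) :
    ContDiff ℝ 1 (pd i f) :=
  (hf.fderiv_right (m := 1) (by norm_num)).clm_apply contDiff_const

lemma exists_dom {n : ℕ} {Ω : Set (Eucl n)} (hΩo : IsOpen Ω) (hΩb : Bornology.IsBounded Ω)
    (hne : Ω.Nonempty) (hΩs : HasSmoothBoundary Ω) :
    ∃ f R c₀ Lf Dm L, Dom Ω f R c₀ Lf Dm L := by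
  obtain ⟨f, hf, hΩ, hfr⟩ := hΩs
  have hf2 : ContDiff ℝ 2 f := by exact_mod_cast contDiff_infty.1 hf 2
  have hf1 : ContDiff ℝ 1 f := hf2.of_le (by norm_num)
  have hcpt : IsCompact (closure Ω) := hΩb.isCompact_closure
  have hcne : (closure Ω).Nonempty := hne.closure
  obtain ⟨R, hR⟩ := hΩb.subset_closedBall 0
  have hmem : ∀ x, x ∈ Ω ↔ f x < 0 := fun x => by rw [hΩ]; rfl
  have hcl : ∀ x ∈ closure Ω, f x ≤ 0 := by
    intro x hx
    have : closure Ω ⊆ {x | f x ≤ 0} := by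
      apply closure_minimal
      · intro y hy; exact ((hmem y).1 hy).le
      · exact isClosed_le hf1.continuous continuous_const
    exact this hx
  have hlapc : Continuous (fun x => |lap f x|) := by
    have : Continuous (lap f) := by
      change Continuous fun x => ∑ i, pd i (pd i f) x
      exact continuous_finsetSum _ fun i _ => pd_continuous (pd_contDiff hf2 i) i
    exact this.abs
  obtain ⟨Lf, hLf⟩ := (hcpt.image hlapc).bddAbove
  obtain ⟨Dm, hDm⟩ := (hcpt.image hf1.continuous.neg).bddAbove
  have hqc : Continuous (fun x => ∑ i, (pd i f x) ^ 2 - f x) :=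
    (continuous_finsetSum _ fun i _ => (pd_continuous hf1 i).pow 2).sub hf1.continuous
  obtain ⟨x₀, hx₀, hmin⟩ := hcpt.exists_isMinOn hcne hqc.continuousOn
  have hqpos : ∀ x ∈ closure Ω, 0 < ∑ i, (pd i f x) ^ 2 - f x := by
    intro x hx
    by_cases hxΩ : x ∈ Ω
    · have := (hmem x).1 hxΩ
      have h2 : 0 ≤ ∑ i, (pd i f x) ^ 2 := Finset.sum_nonneg fun _ _ => sq_nonneg _
      linarith
    · have hxf : x ∈ frontier Ω := ⟨hx, by rwa [hΩo.interior_eq]⟩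
      have hne := hfr x hxf
      have h1 := hcl x hx
      have h2 : 0 < ∑ i, (pd i f x) ^ 2 := by
        refine lt_of_le_of_ne (Finset.sum_nonneg fun _ _ => sq_nonneg _) fun h0 => hne ?_
        have h3 := (Finset.sum_eq_zero_iff_of_nonneg (fun i _ => sq_nonneg (pd i f x))).1 h0.symm
        have h4 : ∀ i, pd i f x = 0 := fun i => by
          have := h3 i (Finset.mem_univ i); exact pow_eq_zero_iff (two_ne_zero) |>.1 this
        apply ContinuousLinearMap.coe_injective
        refine (EuclideanSpace.basisFun (Fin n) ℝ).toBasis.ext fun i => ?_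
        simpa [pd] using h4 i
      linarith
  have hfd : Continuous (fun x => ‖fderiv ℝ f x‖) := (hf1.continuous_fderiv (by norm_num)).norm
  obtain ⟨L, hL⟩ := ((isCompact_closedBall (0 : Eucl n) (R + 1)).image hfd).bddAbove
  refine ⟨f, R, (∑ i, (pd i f x₀) ^ 2 - f x₀) / 2, |Lf| + 1, |Dm| + 1, |L| + 1,
    hΩo, hR, hcpt, hf2, hmem, hcl, ?_, by positivity, by positivity, by positivity, ?_, ?_, ?_, ?_⟩
  · have := hqpos x₀ hx₀; linarith
  · intro x hx
    have : -f x ≤ Dm := hDm (mem_image_of_mem _ hx)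
    have h2 := le_abs_self Dm
    linarith
  · intro x hx
    have := hLf (mem_image_of_mem _ hx)
    have h2 := le_abs_self Lf
    linarith
  · intro x hx
    have := isMinOn_iff.1 hmin x hx
    linarith
  · intro x hx y hy hxy
    have hxn : 0 ≤ f x := by
      by_contra! h; exact hx ((hmem x).2 h)
    have hyb : y ∈ closedBall (0 : Eucl n) (R + 1) := by
      have := hR hy
      rw [mem_closedBall] at this ⊢; linarith
    have hxb : x ∈ closedBall (0 : Eucl n) (R + 1) := by
      have := hR hy
      rw [mem_closedBall] at this ⊢
      linarith [dist_triangle x y 0]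
    have := (convex_closedBall (0 : Eucl n) (R + 1)).norm_image_sub_le_of_norm_fderiv_le
      (𝕜 := ℝ) (f := f) (C := |L| + 1) (fun z _ => hf1.differentiable (by norm_num) z)
      (fun z hz => by
        have := hL (mem_image_of_mem _ hz)
        linarith [le_abs_self L]) hyb hxb
    rw [← dist_eq_norm x y, Real.norm_eq_abs] at this
    have h2 := le_abs_self (f x - f y)
    linarith

lemma isClosed_latticePts (n : ℕ) {ε : ℝ} (hε : 0 < ε) : IsClosed (latticePts n ε) := by
  have : latticePts n ε = ⋂ i, (fun x : Eucl n => x i / ε) ⁻¹' (range ((↑) : ℤ → ℝ)) := by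
    ext x
    simp only [latticePts, mem_ofPred_eq, mem_iInter, mem_preimage, mem_range]
    refine forall_congr' fun i => exists_congr fun z => ?_
    rw [eq_div_iff hε.ne', mul_comm ε]
    exact eq_comm
  rw [this]
  refine isClosed_iInter fun i => ?_
  refine Int.isClosedEmbedding_coe_real.isClosed_range.preimage ?_
  fun_prop

lemma isClosed_holes (n : ℕ) {ε a : ℝ} (hε : 0 < ε) (ha : 0 ≤ a) : IsClosed (holes n ε a) := by
  have := (isClosed_latticePts n hε).cthickening_eq_biUnion_closedBall ha
  unfold holes
  rw [← this]
  exact isClosed_cthickening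

/-- Working form of the solution property. -/
structure Sol {n : ℕ} (D : Set (Eucl n)) (p : ℝ) (φ : Eucl n → ℝ) : Prop where
  cont : Continuous φ
  opn : IsOpen D
  cd : ∀ x ∈ D, ContDiffAt ℝ 2 φ x
  eq : ∀ x ∈ D, lap φ x = -(φ x ^ p)
  pos : ∀ x ∈ D, 0 < φ x
  zero : ∀ x, x ∉ D → φ x = 0

lemma IsEVSol.sol {n : ℕ} {Ω : Set (Eucl n)} {ε a p : ℝ} {φ : Eucl n → ℝ} (hΩ : IsOpen Ω)
    (hε : 0 < ε) (ha : 0 ≤ a) (h : IsEVSol n Ω ε a p φ) : Sol (Ω \ holes n ε a) p φ := by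
  obtain ⟨h1, h2, h3, h4, h5⟩ := h
  have hop : IsOpen (Ω \ holes n ε a) := hΩ.sdiff (isClosed_holes n hε ha)
  refine ⟨?_, hop, fun x hx => (h2 x hx).contDiffAt (hop.mem_nhds hx), fun x hx => ?_, h4, h5⟩
  · have h6 : ContinuousOn φ Ωᶜ := by
      refine (continuousOn_const (c := (0:ℝ))).congr fun x hx => ?_
      exact h5 x fun h => hx h.1
    have := h1.union_of_isClosed h6 isClosed_closure hΩ.isClosed_compl
    rw [← continuousOn_univ]
    refine this.mono fun x _ => ?_
    by_cases hx : x ∈ Ω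
    · exact Or.inl (subset_closure hx)
    · exact Or.inr hx
  · have := h3 x hx; linarith

lemma Sol.nonneg {n : ℕ} {D : Set (Eucl n)} {p : ℝ} {φ : Eucl n → ℝ} (h : Sol D p φ)
    (x : Eucl n) : 0 ≤ φ x := by
  by_cases hx : x ∈ D
  · exact (h.pos x hx).le
  · exact (h.zero x hx).ge

lemma Sol.mem {n : ℕ} {D : Set (Eucl n)} {p : ℝ} {φ : Eucl n → ℝ} (h : Sol D p φ)
    {x : Eucl n} (hx : 0 < φ x) : x ∈ D := by
  by_contra h'
  rw [h.zero x h'] at hx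
  exact lt_irrefl _ hx

/-- Uniform sup bound. -/
lemma Sol.le_sup {n : ℕ} (hn : 1 ≤ n) {D : Set (Eucl n)} {p R : ℝ} {φ : Eucl n → ℝ}
    (h : Sol D p φ) (hp0 : 0 < p) (hp1 : p < 1) (hD : D ⊆ closedBall 0 R) (x : Eucl n) :
    φ x ≤ (R ^ 2 + 1) ^ (1 / (1 - p)) := by
  by_cases hxD : x ∈ D
  swap
  · rw [h.zero x hxD]; positivity
  have hn' : (1:ℝ) ≤ n := by exact_mod_cast hn
  have hcpt := isCompact_closedBall (0 : Eucl n) R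
  have hne : (closedBall (0 : Eucl n) R).Nonempty := ⟨x, hD hxD⟩
  obtain ⟨x₁, hx₁, hmax⟩ := hcpt.exists_isMaxOn hne h.cont.continuousOn
  set m := φ x₁ with hm
  have hle : ∀ y, φ y ≤ m := by
    intro y
    by_cases hy : y ∈ D
    · exact hmax (hD hy)
    · rw [h.zero y hy]; exact h.nonneg _
  have hmpos : 0 < m := (h.pos x hxD).trans_le (hle x)
  have hmp : 0 < m ^ p := Real.rpow_pos_of_pos hmpos _
  -- the paraboloid
  set q : Eucl n → ℝ := fun y => ∑ i, (y i) ^ 2 with hq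
  have hqcd : ContDiff ℝ 2 q := by
    refine ContDiff.sum fun i _ => ?_
    exact ((EuclideanSpace.proj i : Eucl n →L[ℝ] ℝ).contDiff).pow 2
  have hqlap : ∀ y, lap q y = 2 * n := by
    intro y
    have h1 : ∀ t : ℝ, HasDerivAt (fun t : ℝ => t ^ 2) (2 * t) t := fun t => by
      simpa using hasDerivAt_pow 2 t
    have h2 : ∀ t : ℝ, HasDerivAt (fun t : ℝ => 2 * t) ((fun _ => (2:ℝ)) t) t := fun t => by
      simpa using (hasDerivAt_id t).const_mul 2
    have := lap_sep (n := n) h1 h2 y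
    rw [hq, this]; simp; ring
  have hqn : ∀ y, q y = ‖y‖ ^ 2 := by
    intro y; rw [EuclideanSpace.norm_sq_eq]; simp [hq]
  set V : Eucl n → ℝ := fun y => m ^ p * (R ^ 2 + 1 - q y) with hV
  have hVcd : ContDiff ℝ 2 V := contDiff_const.mul (contDiff_const.sub hqcd)
  have hVlap : ∀ y, lap V y = - (m ^ p * (2 * n)) := by
    intro y
    rw [hV, lap_const_mul _ (contDiff_const.sub hqcd).contDiffAt,
      lap_sub contDiffAt_const hqcd.contDiffAt, lap_const, hqlap]; ring
  have hVpos : ∀ y ∈ closedBall (0 : Eucl n) R, 0 < V y := by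
    intro y hy
    rw [mem_closedBall_zero_iff] at hy
    have : ‖y‖ ^ 2 ≤ R ^ 2 := by gcongr
    apply mul_pos hmp
    rw [hqn]; linarith
  obtain ⟨x₂, hx₂, hmax₂⟩ := hcpt.exists_isMaxOn hne
    (h.cont.sub hVcd.continuous).continuousOn
  have key : φ x₂ - V x₂ ≤ 0 := by
    by_contra! hpos
    have hx₂D : x₂ ∈ D := h.mem (by linarith [hVpos x₂ hx₂])
    have hloc : IsLocalMax (fun y => φ y - V y) x₂ := by
      filter_upwards [h.opn.mem_nhds hx₂D] with y hy
      exact hmax₂ (hD hy)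
    have := lap_le_of_touch (h.cd _ hx₂D) hVcd.contDiffAt hloc
    rw [hVlap, h.eq _ hx₂D] at this
    have h2 : φ x₂ ^ p ≤ m ^ p := Real.rpow_le_rpow (h.nonneg _) (hle _) hp0.le
    nlinarith
  have h3 : m - V x₁ ≤ 0 := le_trans (hmax₂ hx₁) key
  have h4 : V x₁ ≤ m ^ p * (R ^ 2 + 1) := by
    apply mul_le_mul_of_nonneg_left _ hmp.le
    rw [hqn]; linarith [sq_nonneg ‖x₁‖]
  have h5 : m ^ (1 - p) ≤ R ^ 2 + 1 := by
    rw [Real.rpow_sub hmpos, Real.rpow_one, div_le_iff₀ hmp]; linarith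
  calc φ x ≤ m := hle x
    _ = (m ^ (1 - p)) ^ (1 / (1 - p)) := by
      rw [← Real.rpow_mul hmpos.le, mul_one_div_cancel (by linarith), Real.rpow_one]
    _ ≤ _ := by
      apply Real.rpow_le_rpow (by positivity) h5
      apply one_div_nonneg.2; linarith

/-! ### Boundary barrier and interior lower bound -/

/-- Linear bound at the boundary. -/
lemma exists_barrier {n : ℕ} {Ω : Set (Eucl n)} {f : Eucl n → ℝ} {R c₀ Lf Dm L : ℝ}
    (hd : Dom Ω f R c₀ Lf Dm L) {M p : ℝ} (hM : 0 < M) (hp0 : 0 < p) :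
    ∃ C > 0, ∀ (D : Set (Eucl n)) (φ : Eucl n → ℝ), Sol D p φ → D ⊆ Ω → (∀ x, φ x ≤ M) →
      ∀ x ∈ Ω, φ x ≤ C * (-f x) := by
  have hc₀ := hd.c₀pos
  have hLf := hd.Lfpos
  obtain ⟨lam, hlam⟩ : ∃ l : ℝ, l = (Lf + 1) / c₀ := ⟨_, rfl⟩
  have hlampos : 0 < lam := by rw [hlam]; positivity
  have hlamc : lam * c₀ = Lf + 1 := by rw [hlam]; field_simp
  have hMp : 0 < M ^ p := Real.rpow_pos_of_pos hM _
  have hexp : 0 < Real.exp (-(lam * c₀)) := Real.exp_pos _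
  have hexp1 : 0 < 1 - Real.exp (-(lam * c₀)) := by
    have : Real.exp (-(lam * c₀)) < 1 := Real.exp_lt_one_iff.2 (by nlinarith)
    linarith
  obtain ⟨Cb, hCb⟩ : ∃ C : ℝ, C = (M ^ p + 1) / (lam * Real.exp (-(lam * c₀))) +
    M / (1 - Real.exp (-(lam * c₀))) := ⟨_, rfl⟩
  have hCbpos : 0 < Cb := by rw [hCb]; positivity
  have hCb1 : M ^ p < Cb * lam * Real.exp (-(lam * c₀)) := by
    have : (M ^ p + 1) / (lam * Real.exp (-(lam * c₀))) ≤ Cb := by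
      rw [hCb]; have : 0 < M / (1 - Real.exp (-(lam * c₀))) := by positivity
      linarith
    rw [div_le_iff₀ (by positivity)] at this
    linarith
  have hCb2 : M ≤ Cb * (1 - Real.exp (-(lam * c₀))) := by
    have : M / (1 - Real.exp (-(lam * c₀))) ≤ Cb := by
      rw [hCb]
      have : 0 < (M ^ p + 1) / (lam * Real.exp (-(lam * c₀))) := by positivity
      linarith
    rwa [div_le_iff₀ hexp1] at this
  refine ⟨Cb * lam + M / c₀, by positivity, ?_⟩
  intro D φ hφ hDΩ hφM x hx
  have hfx : f x < 0 := (hd.mem x).1 hx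
  rcases le_or_gt (f x) (-c₀) with hfc | hfc
  · calc φ x ≤ M := hφM x
      _ = M / c₀ * c₀ := by field_simp
      _ ≤ M / c₀ * (-f x) := by gcongr; linarith
      _ ≤ _ := by
        apply mul_le_mul_of_nonneg_right _ (by linarith)
        have : 0 < Cb * lam := by positivity
        linarith
  set F : ℝ → ℝ := fun z => Cb * (1 - Real.exp (lam * z)) with hF
  set V : Eucl n → ℝ := fun y => F (f y) with hV
  have hVcd : ContDiff ℝ 2 V := by
    rw [hV, hF]
    exact contDiff_const.mul (contDiff_const.sub (contDiff_const.mul hd.cd).exp)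
  have hlin : ∀ z, HasDerivAt (fun z => lam * z) lam z := fun z => by
    simpa using (hasDerivAt_id z).const_mul lam
  have hF1 : ∀ z, HasDerivAt F (-(Cb * lam) * Real.exp (lam * z)) z := by
    intro z
    refine (((hlin z).exp.const_sub 1).const_mul Cb).congr_deriv ?_
    ring
  have hF2 : ∀ z, HasDerivAt (fun z => -(Cb * lam) * Real.exp (lam * z))
      (-(Cb * lam) * (Real.exp (lam * z) * lam)) z := fun z =>
    (hlin z).exp.const_mul _
  set E : Set (Eucl n) := closure Ω ∩ {y | -c₀ ≤ f y} with hE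
  have hEc : IsCompact E := hd.cpt.inter_right (isClosed_le continuous_const hd.cd.continuous)
  have hEne : E.Nonempty := ⟨x, subset_closure hx, hfc.le⟩
  obtain ⟨x₂, hx₂, hmax⟩ := hEc.exists_isMaxOn hEne (hφ.cont.sub hVcd.continuous).continuousOn
  have hVnn : 0 ≤ V x₂ := by
    have h1 := hd.cl x₂ hx₂.1
    have : Real.exp (lam * f x₂) ≤ 1 := Real.exp_le_one_iff.2 (by nlinarith)
    simp only [hV, hF]
    apply mul_nonneg hCbpos.le; linarith
  have key : φ x₂ - V x₂ ≤ 0 := by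
    by_contra! hpos
    have hx₂D : x₂ ∈ D := hφ.mem (by linarith)
    have hne : -c₀ < f x₂ := by
      refine lt_of_le_of_ne hx₂.2 fun h => ?_
      have : V x₂ = Cb * (1 - Real.exp (-(lam * c₀))) := by
        simp only [hV, hF]; rw [← h]; congr 3; ring
      linarith [hφM x₂]
    have hloc : IsLocalMax (fun y => φ y - V y) x₂ := by
      filter_upwards [hφ.opn.mem_nhds hx₂D, hd.cd.continuous.continuousAt.eventually (lt_mem_nhds hne)]
        with y hy hy2
      exact hmax ⟨subset_closure (hDΩ hy), le_of_lt hy2⟩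
    have h1 := lap_le_of_touch (hφ.cd _ hx₂D) hVcd.contDiffAt hloc
    have h2 : lap V x₂ = _ := lap_comp (hd.cd.contDiffAt (x := x₂))
      (Eventually.of_forall hF1) (hF2 (f x₂))
    rw [h2, hφ.eq _ hx₂D] at h1
    have h3 : φ x₂ ^ p ≤ M ^ p := Real.rpow_le_rpow (hφ.nonneg _) (hφM _) hp0.le
    have h4 := (abs_le.1 (hd.lapf x₂ hx₂.1)).1
    have h5 := hd.grad x₂ hx₂.1
    set g := ∑ i, pd i f x₂ ^ 2
    have h6 : f x₂ ≤ 0 := hd.cl x₂ hx₂.1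
    have h7 : c₀ ≤ g := by linarith
    have h8 : Real.exp (-(lam * c₀)) ≤ Real.exp (lam * f x₂) := by
      apply Real.exp_le_exp.2; nlinarith
    have h9 : 1 ≤ lap f x₂ + lam * g := by
      have : lam * c₀ ≤ lam * g := by gcongr
      linarith
    have h10 : Cb * lam * Real.exp (-(lam * c₀)) ≤
        Cb * lam * Real.exp (lam * f x₂) * (lap f x₂ + lam * g) := by
      calc Cb * lam * Real.exp (-(lam * c₀)) ≤ Cb * lam * Real.exp (lam * f x₂) := by gcongr
        _ = Cb * lam * Real.exp (lam * f x₂) * 1 := by ring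
        _ ≤ _ := by gcongr
    nlinarith
  have h3 : φ x - V x ≤ 0 := le_trans (hmax ⟨subset_closure hx, hfc.le⟩) key
  have h4 : V x ≤ Cb * lam * (-f x) := by
    simp only [hV, hF]
    have := Real.add_one_le_exp (lam * f x)
    nlinarith
  have h5 : 0 ≤ M / c₀ * (-f x) := by
    apply mul_nonneg (by positivity); linarith
  nlinarith

/-- Lower bound in the interior. -/
lemma exists_lower {n : ℕ} (hn : 3 ≤ n) {Ω : Set (Eucl n)} {f : Eucl n → ℝ} {R c₀ Lf Dm L : ℝ}
    (hd : Dom Ω f R c₀ Lf Dm L) {p : ℝ} (hp0 : 0 < p) (hp1 : p < 1) :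
    ∃ t > 0, ∃ θ > 0, ∀ ε ∈ Ioo (0:ℝ) 1, ∀ φ : Eucl n → ℝ, Sol (Ω \ holes n ε (aStar n ε)) p φ →
      ∀ x ∈ Ω \ holes n ε (aStar n ε), Gf n ε x < θ * (-f x) →
        t * (-f x / 2) ^ (1 / (1 - p)) ≤ φ x := by
  obtain ⟨cn, hcn, c₂, hc₂, C₁, hC₁, C₂, hC₂, hG⟩ := Gf_props n hn
  have hDm := hd.Dmpos
  have hLf := hd.Lfpos
  obtain ⟨Lam, hLam⟩ : ∃ l : ℝ, l = (Dm + 1) / cn := ⟨_, rfl⟩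
  have hLampos : 0 < Lam := by rw [hLam]; positivity
  have hLamc : Lam * cn = Dm + 1 := by rw [hLam]; field_simp
  obtain ⟨k, hk⟩ : ∃ k : ℝ, k = 1 / (1 - p) := ⟨_, rfl⟩
  have hp1' : 0 < 1 - p := by linarith
  have hkp : k * (1 - p) = 1 := by rw [hk]; field_simp
  have hk1 : 1 < k := by nlinarith
  obtain ⟨C₆, hC₆⟩ : ∃ C : ℝ, C = Lf + Lam * C₂ := ⟨_, rfl⟩
  have hC₆pos : 0 < C₆ := by rw [hC₆]; positivity
  obtain ⟨t, ht⟩ : ∃ t : ℝ, t = (1 / (k * C₆)) ^ k := ⟨_, rfl⟩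
  have hkC : 0 < k * C₆ := by positivity
  have htpos : 0 < t := by rw [ht]; positivity
  have htp : t ^ (1 - p) * (k * C₆) = 1 := by
    rw [ht, ← Real.rpow_mul (by positivity), hkp, Real.rpow_one]; field_simp
  rw [← hk]
  refine ⟨t, htpos, 1 / (2 * Lam), by positivity, ?_⟩
  intro ε hε φ hφ x hx hGx
  obtain ⟨hG1, hG2, hG3, hG4⟩ := hG ε hε
  have ha : 0 < aStar n ε := Real.rpow_pos_of_pos hε.1 _
  have hε0 := hε.1
  set D := Ω \ holes n ε (aStar n ε) with hD
  set S₀ := aStar n ε ^ 2 / ε ^ 2 with hS₀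
  have hS₀pos : 0 < S₀ := by positivity
  have hDS : ∀ y ∈ D, S₀ ≤ Sf n ε y := fun y hy => Sf_ge hε0 ha hy.2
  set σ : Eucl n → ℝ := fun y => -f y - Lam * Gf n ε y with hσ
  have hσcd : ∀ y, 0 < Sf n ε y → ContDiffAt ℝ 2 σ y := fun y hy =>
    hd.cd.contDiffAt.neg.sub (contDiffAt_const.mul (Gf_contDiffAt hy))
  set E₀ : Set (Eucl n) := closure Ω ∩ {y | S₀ ≤ Sf n ε y} with hE₀
  have hE₀c : IsCompact E₀ :=
    hd.cpt.inter_right (isClosed_le continuous_const (Sf_contDiff n ε).continuous)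
  have hσc : ContinuousOn σ E₀ := fun y hy =>
    (hσcd y (hS₀pos.trans_le hy.2)).continuousAt.continuousWithinAt
  set E : Set (Eucl n) := E₀ ∩ σ ⁻¹' (Ici 0) with hE
  have hEc : IsCompact E :=
    hE₀c.of_isClosed_subset (hσc.preimage_isClosed_of_isClosed hE₀c.isClosed isClosed_Ici)
      inter_subset_left
  have hED : ∀ y ∈ E, y ∈ D := by
    intro y hy
    have hS : 0 < Sf n ε y := hS₀pos.trans_le hy.1.2
    have h0 : 0 ≤ -f y - Lam * Gf n ε y := hy.2
    have h1 := mul_pos hLampos (hG1 y hS)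
    refine ⟨(hd.mem y).2 (by linarith), fun hh => ?_⟩
    have h2 := hG2 y hS hh
    have h3 : Lam * cn ≤ Lam * Gf n ε y := by gcongr
    have h4 := hd.le_Dm y hy.1.1
    linarith
  have hσx : -f x / 2 ≤ σ x := by
    have : Lam * Gf n ε x ≤ Lam * (1 / (2 * Lam) * (-f x)) := by gcongr
    have h2 : Lam * (1 / (2 * Lam) * (-f x)) = -f x / 2 := by field_simp
    simp only [hσ]; linarith
  have hfx : f x < 0 := (hd.mem x).1 hx.1
  have hσxpos : 0 < σ x := by linarith
  have hxE : x ∈ E := ⟨⟨subset_closure hx.1, hDS x hx⟩, hσxpos.le⟩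
  set r : Eucl n → ℝ := fun y => t * σ y ^ k / φ y with hr
  have hrc : ContinuousOn r E := by
    refine ContinuousOn.div ?_ hφ.cont.continuousOn fun y hy => (hφ.pos y (hED y hy)).ne'
    exact continuousOn_const.mul ((hσc.mono inter_subset_left).rpow_const
      fun _ _ => Or.inr (by linarith))
  obtain ⟨x₀, hx₀, hmax⟩ := hEc.exists_isMaxOn ⟨x, hxE⟩ hrc
  set lam := r x₀ with hlam
  have hx₀D := hED x₀ hx₀
  have hφ₀ := hφ.pos x₀ hx₀D
  have key : lam ≤ 1 := by
    by_contra! hgt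
    have heq : lam * φ x₀ = t * σ x₀ ^ k := by
      rw [hlam, hr]; field_simp
    have hσ₀nn : 0 ≤ σ x₀ := hx₀.2
    have hσ₀ : 0 < σ x₀ := by
      refine lt_of_le_of_ne hσ₀nn fun h => ?_
      rw [← h, Real.zero_rpow (by linarith), mul_zero] at heq
      nlinarith
    have hS : 0 < Sf n ε x₀ := hS₀pos.trans_le hx₀.1.2
    have hcd0 := hσcd x₀ hS
    have hscd : ContDiffAt ℝ 2 (fun y => t * σ y ^ k) x₀ :=
      contDiffAt_const.mul (hcd0.rpow_const_of_ne hσ₀.ne')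
    have hloc : IsLocalMax (fun y => t * σ y ^ k - lam * φ y) x₀ := by
      filter_upwards [hφ.opn.mem_nhds hx₀D, hcd0.continuousAt.eventually (lt_mem_nhds hσ₀)]
        with y hy hy2
      have h1 : r y ≤ lam := hmax ⟨⟨subset_closure hy.1, hDS y hy⟩, le_of_lt hy2⟩
      rw [hr] at h1
      rw [div_le_iff₀ (hφ.pos y hy)] at h1
      linarith
    have h1 := lap_le_of_touch hscd (contDiffAt_const.mul (hφ.cd _ hx₀D)) hloc
    rw [lap_const_mul _ (hφ.cd _ hx₀D), hφ.eq _ hx₀D,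
      lap_const_mul _ (hcd0.rpow_const_of_ne hσ₀.ne')] at h1
    have hF1 : ∀ᶠ z in 𝓝 (σ x₀), HasDerivAt (fun z : ℝ => z ^ k) (k * z ^ (k - 1)) z := by
      filter_upwards with z
      exact Real.hasDerivAt_rpow_const (Or.inr hk1.le)
    have hF2 : HasDerivAt (fun z : ℝ => k * z ^ (k - 1)) (k * ((k - 1) * σ x₀ ^ (k - 1 - 1))) (σ x₀) :=
      (Real.hasDerivAt_rpow_const (Or.inl hσ₀.ne')).const_mul k
    rw [lap_comp hcd0 hF1 hF2] at h1
    have hlapσ : -C₆ ≤ lap σ x₀ := by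
      have e1 : lap σ x₀ = -lap f x₀ - Lam * lap (Gf n ε) x₀ := by
        have : σ = fun y => (-1) * f y - Lam * Gf n ε y := by ext y; simp [hσ]
        rw [this, lap_sub (contDiffAt_const.mul hd.cd.contDiffAt)
          (contDiffAt_const.mul (Gf_contDiffAt hS)), lap_const_mul _ hd.cd.contDiffAt,
          lap_const_mul _ (Gf_contDiffAt hS)]; ring
      have e2 := (abs_le.1 (hd.lapf x₀ hx₀.1.1)).2
      have e3 := hG4 x₀ hS
      have e4 : 0 ≤ c₂ * (Gf n ε x₀ / ε ^ 2) := by have := hG1 x₀ hS; positivity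
      have e5 : Lam * lap (Gf n ε) x₀ ≤ Lam * C₂ := by gcongr; linarith
      rw [e1, hC₆]; linarith
    have hX : 0 < σ x₀ ^ (k - 1) := Real.rpow_pos_of_pos hσ₀ _
    have hY : 0 ≤ k * ((k - 1) * σ x₀ ^ (k - 1 - 1)) * ∑ i, pd i σ x₀ ^ 2 := by
      have : 0 < σ x₀ ^ (k - 1 - 1) := Real.rpow_pos_of_pos hσ₀ _
      have h2 : 0 ≤ ∑ i, pd i σ x₀ ^ 2 := Finset.sum_nonneg fun _ _ => sq_nonneg _
      have h3 : 0 < k - 1 := by linarith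
      positivity
    -- combine
    have h2 : lam * φ x₀ ^ p ≤ t * (k * C₆) * σ x₀ ^ (k - 1) := by
      have e1 : -(k * σ x₀ ^ (k - 1) * C₆) ≤ k * σ x₀ ^ (k - 1) * lap σ x₀ := by
        have : k * σ x₀ ^ (k - 1) * (-C₆) ≤ k * σ x₀ ^ (k - 1) * lap σ x₀ := by gcongr
        linarith
      have e2 : t * (-(k * σ x₀ ^ (k - 1) * C₆)) ≤
        t * (k * σ x₀ ^ (k - 1) * lap σ x₀ +
          k * ((k - 1) * σ x₀ ^ (k - 1 - 1)) * ∑ i, pd i σ x₀ ^ 2) := by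
        gcongr; linarith
      nlinarith
    have hlpos : 0 < lam := by linarith
    have h3 : lam ^ (1 - p) * (t ^ p * σ x₀ ^ (k - 1)) = lam * φ x₀ ^ p := by
      have e1 : (lam * φ x₀) ^ p = t ^ p * σ x₀ ^ (k - 1) := by
        rw [heq, Real.mul_rpow htpos.le (by positivity), ← Real.rpow_mul hσ₀.le]
        congr 2; linarith
      rw [← e1, Real.mul_rpow hlpos.le hφ₀.le, ← mul_assoc, ← Real.rpow_add hlpos]
      simp
    have h4 : t = t ^ (1 - p) * t ^ p := by
      rw [← Real.rpow_add htpos]; simp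
    have h5 : lam ^ (1 - p) * (t ^ p * σ x₀ ^ (k - 1)) ≤ 1 * (t ^ p * σ x₀ ^ (k - 1)) := by
      rw [h3]
      refine h2.trans (le_of_eq ?_)
      calc t * (k * C₆) * σ x₀ ^ (k - 1) = (t ^ (1 - p) * t ^ p) * (k * C₆) * σ x₀ ^ (k - 1) := by
            rw [← h4]
        _ = (t ^ (1 - p) * (k * C₆)) * (t ^ p * σ x₀ ^ (k - 1)) := by ring
        _ = _ := by rw [htp]
    have h6 : lam ^ (1 - p) ≤ 1 :=
      le_of_mul_le_mul_right h5 (by positivity)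
    have h7 : 1 < lam ^ (1 - p) := Real.one_lt_rpow hgt hp1'
    linarith
  have h1 : r x ≤ 1 := le_trans (hmax hxE) key
  rw [hr] at h1
  rw [div_le_one (hφ.pos x hx)] at h1
  refine le_trans ?_ h1
  have : (-f x / 2) ^ k ≤ σ x ^ k := Real.rpow_le_rpow (by linarith) hσx (by linarith)
  gcongr

/-! ### The main comparison -/

lemma sqrt_barrier {n : ℕ} {Ω : Set (Eucl n)} {f : Eucl n → ℝ} {R c₀ Lf Dm L : ℝ}
    (hd : Dom Ω f R c₀ Lf Dm L) {x : Eucl n} (hx : x ∈ Ω) {s : ℝ} (hs : 0 < s)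
    (hsd : s ^ 2 * (-f x) = 1) :
    ContDiffAt ℝ 2 (fun y => Real.sqrt (-f y)) x ∧
    lap (fun y => Real.sqrt (-f y)) x ≤ (1 / 4 + Lf / 2) * s - c₀ / 2 * s ^ 3 := by
  have hfx : f x < 0 := (hd.mem x).1 hx
  refine ⟨hd.cd.contDiffAt.neg.sqrt (by linarith), ?_⟩
  have hF1 : ∀ z : ℝ, z < 0 → HasDerivAt (fun z => Real.sqrt (-z))
      (-(1 / 2) * (-z) ^ (-(1/2) : ℝ)) z := by
    intro z hz
    have h := (hasDerivAt_neg z).sqrt (by linarith)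
    refine h.congr_deriv ?_
    rw [Real.rpow_neg (by linarith), ← Real.sqrt_eq_rpow]
    have : 0 < Real.sqrt (-z) := Real.sqrt_pos.2 (by linarith)
    field_simp
  have hF2 : HasDerivAt (fun z : ℝ => -(1 / 2) * (-z) ^ (-(1/2) : ℝ))
      (-(1/4) * (-f x) ^ (-(1/2) - 1 : ℝ)) (f x) := by
    have h := ((hasDerivAt_neg (f x)).rpow_const (p := -(1/2)) (Or.inl (by linarith))).const_mul
      (-(1/2) : ℝ)
    refine h.congr_deriv ?_
    ring
  have h := lap_comp (hd.cd.contDiffAt (x := x)) (F := fun z => Real.sqrt (-z))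
    (F' := fun z => -(1 / 2) * (-z) ^ (-(1/2) : ℝ))
    (by filter_upwards [gt_mem_nhds hfx] with z hz using hF1 z hz) hF2
  rw [h]
  have hdd : -f x = (s ^ 2)⁻¹ := by field_simp; linarith
  have e1 : (-f x) ^ (-(1/2) : ℝ) = s := by
    rw [hdd, ← Real.rpow_natCast, ← Real.rpow_neg hs.le, ← Real.rpow_mul hs.le]; norm_num
  have e2 : (-f x) ^ (-(1/2) - 1 : ℝ) = s ^ 3 := by
    rw [hdd, ← Real.rpow_natCast, ← Real.rpow_neg hs.le, ← Real.rpow_mul hs.le,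
      ← Real.rpow_natCast]; norm_num
  rw [e2]
  simp only [e1]
  have h4 := (abs_le.1 (hd.lapf x (subset_closure hx))).1
  have h5 := hd.grad x (subset_closure hx)
  set g := ∑ i, pd i f x ^ 2
  have h6 : s ^ 3 * (2 * c₀ + f x) ≤ s ^ 3 * g := by gcongr; linarith
  have h7 : s * (-Lf) ≤ s * lap f x := by gcongr
  have h8 : s ^ 3 * f x = - s := by
    linear_combination (-s) * hsd
  nlinarith

set_option maxHeartbeats 1600000 in
lemma numeric_core {p a b A₂ c θ t M Ch : ℝ} (hp0 : 0 < p) (hp1 : p < 1) (ha : 0 < a)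
    (hb : 0 < b) (hA : 0 < A₂) (hc : 0 < c) (hθ : 0 < θ) (ht : 0 < t) (hM : 0 < M)
    (hCh : 0 < Ch) :
    ∃ K > 0, ∃ ε₀ ∈ Ioo (0:ℝ) 1, ∀ ε ∈ Ioo 0 ε₀, ∀ s d G φ h w : ℝ, 0 < s → s ^ 2 * d = 1 →
      0 < G → 0 < φ → φ ≤ M → 0 < h → h ≤ Ch → ε ≤ w →
      (θ * d ≤ G ∨ t * (d / 2) ^ (1 / (1 - p)) ≤ φ) →
      ((φ + w) ^ p - φ ^ p) * (K * φ + h) <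
        w * (K * φ ^ p + (a * s ^ 3 - b * s) + (c * (G / ε ^ 2) - A₂)) := by
  obtain ⟨C6, hC6⟩ : ∃ C, C = 2 * p * t ^ (p - 1) := ⟨_, rfl⟩
  have hC6pos : 0 < C6 := by rw [hC6]; positivity
  obtain ⟨S, hS⟩ : ∃ S, S = 1 + (b + A₂ + C6 * Ch) / a := ⟨_, rfl⟩
  have hS1 : 1 ≤ S := by rw [hS]; have : 0 < (b + A₂ + C6 * Ch) / a := by positivity
                         linarith
  have haS : b + A₂ + C6 * Ch < a * S := by
    rw [hS, mul_add, mul_div_cancel₀ _ ha.ne']; linarith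
  obtain ⟨φ₀, hφ₀⟩ : ∃ q, q = t * (((S ^ 2)⁻¹) / 2) ^ (1 / (1 - p)) := ⟨_, rfl⟩
  have hφ₀pos : 0 < φ₀ := by rw [hφ₀]; positivity
  have h1p : 0 < 1 - p := by linarith
  obtain ⟨K, hK⟩ : ∃ K, K = (b * S + A₂ + C6 * Ch * S ^ 2 + 1) / ((1 - p) * φ₀ ^ p) := ⟨_, rfl⟩
  have hKpos : 0 < K := by rw [hK]; positivity
  have hK' : K * ((1 - p) * φ₀ ^ p) = b * S + A₂ + C6 * Ch * S ^ 2 + 1 := by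
    rw [hK]; field_simp
  obtain ⟨c4, hc4⟩ : ∃ q, q = min (a / 2) (c * θ) := ⟨_, rfl⟩
  have hc4pos : 0 < c4 := by rw [hc4]; positivity
  obtain ⟨S2, hS2⟩ : ∃ q, q = 1 + 2 * b / a := ⟨_, rfl⟩
  have hS2pos : 1 ≤ S2 := by rw [hS2]; have : 0 < 2 * b / a := by positivity
                             linarith
  have haS2 : 2 * b ≤ a * S2 := by
    rw [hS2, mul_add, mul_div_cancel₀ _ ha.ne']; linarith
  obtain ⟨CH, hCH⟩ : ∃ q, q = K * M + Ch := ⟨_, rfl⟩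
  have hev : ∀ᶠ ε in 𝓝 (0:ℝ), CH * ε ^ p + (b * S2 + A₂) * ε < c4 := by
    have hcont : ContinuousAt (fun ε : ℝ => CH * ε ^ p + (b * S2 + A₂) * ε) 0 := by
      have : ContinuousAt (fun ε : ℝ => ε ^ p) 0 :=
        Real.continuousAt_rpow_const _ _ (Or.inr hp0.le)
      fun_prop
    refine hcont.eventually (gt_mem_nhds ?_)
    simp [Real.zero_rpow hp0.ne', hc4pos]
  obtain ⟨e1, he1, hball⟩ := Metric.eventually_nhds_iff.1 hev
  refine ⟨K, hKpos, min e1 (1/2), ⟨by positivity, by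
    have := min_le_right e1 (1/2); linarith⟩, ?_⟩
  intro ε hε s d G φ h w hs hsd hG hφ hφM hh hhC hw hor
  have hε0 : 0 < ε := hε.1
  have hε1 : ε < 1 := by have := min_le_right e1 (1/2); linarith [hε.2]
  have hsm := hball (y := ε) (by
    rw [dist_zero_right, Real.norm_of_nonneg hε0.le]; exact hε.2.trans_le (min_le_left _ _))
  have hw0 : 0 < w := hε0.trans_le hw
  have hφp : 0 < φ ^ p := Real.rpow_pos_of_pos hφ _
  have hHpos : 0 < K * φ + h := by positivity
  have hdd : d = (s ^ 2)⁻¹ := by field_simp; linarith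
  -- it suffices to find a good slope
  suffices hsl : ∃ q, (φ + w) ^ p - φ ^ p ≤ q * w ∧
      q * (K * φ + h) < K * φ ^ p + (a * s ^ 3 - b * s) + (c * (G / ε ^ 2) - A₂) by
    obtain ⟨q, hq1, hq2⟩ := hsl
    calc ((φ + w) ^ p - φ ^ p) * (K * φ + h) ≤ (q * w) * (K * φ + h) := by gcongr
      _ = w * (q * (K * φ + h)) := by ring
      _ < _ := by gcongr
  rcases hor with hor | hor
  · refine ⟨ε ^ (p - 1), ?_, ?_⟩
    · have h1 : (φ + w) ^ p ≤ φ ^ p + w ^ p := Real.rpow_add_le_add_rpow hφ.le hw0.le hp0.le hp1.le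
      have h2 : w ^ p = w ^ (p - 1) * w := by
        rw [← Real.rpow_add_one hw0.ne']; congr 1; ring
      have h3 : w ^ (p - 1) ≤ ε ^ (p - 1) :=
        Real.rpow_le_rpow_of_nonpos hε0 hw (by linarith)
      have : w ^ (p - 1) * w ≤ ε ^ (p - 1) * w := by gcongr
      linarith
    · have h1 : K * φ + h ≤ CH := by rw [hCH]; gcongr
      have h2 : ε ^ (p - 1) * (K * φ + h) ≤ ε ^ (p - 1) * CH := by gcongr
      have h3 : ε ^ (p - 1) = ε ^ p * ε⁻¹ := by
        rw [Real.rpow_sub_one hε0.ne']; ring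
      have h4 : ε ^ (p - 1) * CH < c4 * ε⁻¹ - (b * S2 + A₂) := by
        rw [h3]
        have := mul_lt_mul_of_pos_right hsm (inv_pos.2 hε0)
        have e : ε * ε⁻¹ = 1 := mul_inv_cancel₀ hε0.ne'
        have e' : (CH * ε ^ p + (b * S2 + A₂) * ε) * ε⁻¹ = ε ^ p * ε⁻¹ * CH + (b * S2 + A₂) := by
          linear_combination (b * S2 + A₂) * e
        linarith
      have h5 : b * s ≤ a / 2 * s ^ 3 + b * S2 := by
        rcases le_or_gt s S2 with h | h
        · have : b * s ≤ b * S2 := by gcongr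
          have : 0 < a / 2 * s ^ 3 := by positivity
          linarith
        · have h51 : a * S2 ≤ a * s ^ 2 := by
            have : s ≤ s ^ 2 := le_self_pow₀ (hS2pos.trans h.le) (by norm_num)
            gcongr; linarith
          have : b * s ≤ a / 2 * s ^ 2 * s := by gcongr; linarith
          have : 0 < b * S2 := by positivity
          have e : a / 2 * s ^ 2 * s = a / 2 * s ^ 3 := by ring
          linarith
      have h6 : c * θ * (d / ε ^ 2) ≤ c * (G / ε ^ 2) := by
        have : c * (θ * d / ε ^ 2) ≤ c * (G / ε ^ 2) := by gcongr
        calc _ = c * (θ * d / ε ^ 2) := by ring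
          _ ≤ _ := this
      have hd0 : 0 < d := by rw [hdd]; positivity
      have h7 : ε⁻¹ ≤ s ^ 3 + d / ε ^ 2 := by
        rcases le_or_gt ε d with h | h
        · have : ε⁻¹ ≤ d / ε ^ 2 := by
            rw [le_div_iff₀ (by positivity)]
            calc ε⁻¹ * ε ^ 2 = ε := by field_simp
              _ ≤ d := h
          have : 0 < s ^ 3 := by positivity
          linarith
        · have h71 : ε⁻¹ ≤ s ^ 2 := by
            rw [inv_le_iff_one_le_mul₀ hε0]
            have : s ^ 2 * d ≤ s ^ 2 * ε := by gcongr
            linarith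
          have h72 : 1 ≤ s := by
            have : 1 ≤ ε⁻¹ := (one_le_inv₀ hε0).2 hε1.le
            exact (one_le_sq_iff₀ hs.le).1 (this.trans h71)
          have : s ^ 2 ≤ s ^ 3 := pow_le_pow_right₀ h72 (by norm_num)
          have : 0 < d / ε ^ 2 := by positivity
          linarith
      have h8 : c4 * s ^ 3 ≤ a / 2 * s ^ 3 := by
        gcongr; rw [hc4]; exact min_le_left _ _
      have h9 : c4 * (d / ε ^ 2) ≤ c * θ * (d / ε ^ 2) := by
        gcongr; rw [hc4]; exact min_le_right _ _
      have h10 := mul_le_mul_of_nonneg_left h7 hc4pos.le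
      have h11 : 0 < K * φ ^ p := by positivity
      rw [mul_add] at h10
      linarith
  · have e3 : φ ^ (p - 1) * φ = φ ^ p := by
      rw [← Real.rpow_add_one hφ.ne']; congr 1; ring
    refine ⟨p * φ ^ (p - 1), ?_, ?_⟩
    · have h1 := rpow_one_add_le_one_add_mul_self (s := w / φ) (p := p)
        (by have : 0 < w / φ := by positivity
            linarith) hp0.le hp1.le
      have h2 : φ + w = φ * (1 + w / φ) := by field_simp
      rw [h2, Real.mul_rpow hφ.le (by positivity)]
      have h3 := mul_le_mul_of_nonneg_left h1 hφp.le
      have h4 : φ ^ p * (1 + p * (w / φ)) = φ ^ p + p * φ ^ (p - 1) * w := by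
        rw [← e3]; field_simp
      linarith
    · have hd0 : 0 < d := by rw [hdd]; positivity
      have h1 : p * φ ^ (p - 1) ≤ C6 * s ^ 2 := by
        have h11 : φ ^ (p - 1) ≤ (t * (d / 2) ^ (1 / (1 - p))) ^ (p - 1) :=
          Real.rpow_le_rpow_of_nonpos (by positivity) hor (by linarith)
        have h12 : (t * (d / 2) ^ (1 / (1 - p))) ^ (p - 1) = t ^ (p - 1) * (2 * s ^ 2) := by
          rw [Real.mul_rpow ht.le (by positivity), ← Real.rpow_mul (by positivity)]
          have : 1 / (1 - p) * (p - 1) = -1 := by field_simp; ring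
          rw [this, Real.rpow_neg_one, hdd]
          field_simp
        rw [h12] at h11
        calc p * φ ^ (p - 1) ≤ p * (t ^ (p - 1) * (2 * s ^ 2)) := by gcongr
          _ = _ := by rw [hC6]; ring
      have h2 : p * φ ^ (p - 1) * (K * φ + h) ≤ p * (K * φ ^ p) + C6 * s ^ 2 * Ch := by
        have : p * φ ^ (p - 1) * h ≤ C6 * s ^ 2 * Ch := by gcongr
        have e : p * φ ^ (p - 1) * (K * φ + h) = p * (K * (φ ^ (p - 1) * φ))
          + p * φ ^ (p - 1) * h := by ring
        rw [e, e3]; linarith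
      have h3 : 0 < c * (G / ε ^ 2) := by positivity
      have h4 : 0 < (1 - p) * (K * φ ^ p) := by positivity
      suffices h5 : b * s + A₂ + C6 * s ^ 2 * Ch < a * s ^ 3 + (1 - p) * (K * φ ^ p) by
        linarith
      rcases le_or_gt S s with hSs | hSs
      · have hs1 : 1 ≤ s := hS1.trans hSs
        have h6 : b * s ≤ b * s ^ 2 := by
          gcongr; exact le_self_pow₀ hs1 (by norm_num)
        have h7 : A₂ ≤ A₂ * s ^ 2 := le_mul_of_one_le_right hA.le (one_le_pow₀ hs1)
        have h8 : a * S * s ^ 2 ≤ a * s * s ^ 2 := by gcongr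
        have h9 : (b + A₂ + C6 * Ch) * s ^ 2 < a * S * s ^ 2 := by gcongr
        have e4 : (b + A₂ + C6 * Ch) * s ^ 2 = b * s ^ 2 + A₂ * s ^ 2 + C6 * s ^ 2 * Ch := by ring
        have e5 : a * s * s ^ 2 = a * s ^ 3 := by ring
        linarith
      · have h6 : φ₀ ≤ φ := by
          refine le_trans ?_ hor
          rw [hφ₀, hdd]
          gcongr
        have h7 : φ₀ ^ p ≤ φ ^ p := by gcongr
        have h8 : K * ((1 - p) * φ₀ ^ p) ≤ K * ((1 - p) * φ ^ p) := by gcongr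
        have h9 : b * s ≤ b * S := by gcongr
        have h10 : C6 * s ^ 2 * Ch ≤ C6 * S ^ 2 * Ch := by gcongr
        have h11 : 0 < a * s ^ 3 := by positivity
        have e4 : C6 * S ^ 2 * Ch = C6 * Ch * S ^ 2 := by ring
        have e5 : (1 - p) * (K * φ ^ p) = K * ((1 - p) * φ ^ p) := by ring
        linarith

set_option maxHeartbeats 1600000 in
/-- One-sided bound of the difference quotients. -/
lemma exists_diff_bound {n : ℕ} (hn : 3 ≤ n) {Ω : Set (Eucl n)} {f : Eucl n → ℝ}
    {R c₀ Lf Dm L : ℝ} (hd : Dom Ω f R c₀ Lf Dm L) {p : ℝ} (hp0 : 0 < p) (hp1 : p < 1) :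
    ∃ C > 0, ∀ ε ∈ Ioo (0:ℝ) 1, ∀ v : Eucl n, ‖v‖ = 1 →
      (∀ x ∈ holes n ε (aStar n ε), x + ε • v ∈ holes n ε (aStar n ε)) →
      ∀ φ : Eucl n → ℝ, Sol (Ω \ holes n ε (aStar n ε)) p φ →
      ∀ x, φ (x + ε • v) - φ x ≤ C * ε := by
  obtain ⟨cn, hcn, c₂, hc₂, C₁, hC₁, C₂, hC₂, hG⟩ := Gf_props n hn
  obtain ⟨M, hM⟩ : ∃ M, M = (R ^ 2 + 1) ^ (1 / (1 - p)) := ⟨_, rfl⟩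
  have hMpos : 0 < M := by rw [hM]; positivity
  obtain ⟨C₃, hC₃, hbar⟩ := exists_barrier hd hMpos hp0
  obtain ⟨t, ht, θ, hθ, hlow⟩ := exists_lower hn hd hp0 hp1
  have hc₀ := hd.c₀pos
  have hLf := hd.Lfpos
  have hDm := hd.Dmpos
  have hL := hd.Lpos
  obtain ⟨Ch, hCh⟩ : ∃ q, q = 1 + Real.sqrt Dm + C₁ := ⟨_, rfl⟩
  have hChpos : 0 < Ch := by rw [hCh]; positivity
  obtain ⟨K, hK, ε₀, hε₀, hnum⟩ := numeric_core (a := c₀ / 2) (b := 1 / 4 + Lf / 2) (A₂ := C₂)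
    hp0 hp1 (by positivity) (by positivity) hC₂ hc₂ hθ ht hMpos hChpos
  have hε₀pos : 0 < ε₀ := hε₀.1
  obtain ⟨C₄, hC₄⟩ : ∃ q, q = C₃ * L + 1 := ⟨_, rfl⟩
  have hC₄1 : 1 ≤ C₄ := by
    rw [hC₄]; have : 0 < C₃ * L := by positivity
    linarith
  have hC₄pos : 0 < C₄ := by linarith
  obtain ⟨CH, hCH⟩ : ∃ q, q = K * M + Ch := ⟨_, rfl⟩
  have hCHpos : 0 < CH := by rw [hCH]; positivity
  have hCH1 : 1 ≤ CH := by
    have : 0 < K * M := by positivity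
    have := Real.sqrt_nonneg Dm
    rw [hCH, hCh]; linarith
  refine ⟨M / ε₀ + C₄ * CH, by positivity, ?_⟩
  intro ε hε v hv hper φ hφ x
  have hε0 : 0 < ε := hε.1
  have hε1 : ε < 1 := hε.2
  obtain ⟨hG1, hG2, hG3, hG4⟩ := hG ε hε
  have hφM : ∀ y, φ y ≤ M := by
    intro y; rw [hM]
    exact hφ.le_sup (by omega) hp0 hp1 (fun z hz => hd.bdd hz.1) y
  have hpos1 : 0 < M / ε₀ * ε := by positivity
  have hpos2 : 0 < C₄ * CH * ε := by positivity
  rcases le_or_gt ε₀ ε with hεε | hεε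
  · have h1 : M ≤ M / ε₀ * ε := by
      rw [div_mul_eq_mul_div, le_div_iff₀ hε₀pos]; gcongr
    have h2 := hφM (x + ε • v)
    have h3 := hφ.nonneg x
    rw [add_mul]; linarith
  -- small ε
  have ha : 0 < aStar n ε := Real.rpow_pos_of_pos hε0 _
  have hdist : ∀ y : Eucl n, dist y (y + ε • v) = ε := by
    intro y
    rw [dist_self_add_right, norm_smul, hv, Real.norm_of_nonneg hε0.le, mul_one]
  have hout : ∀ y, y ∉ Ω → φ (y + ε • v) - φ y < C₄ * ε := by
    intro y hy
    have h3 := hφ.nonneg y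
    have h5 : C₃ * L * ε < C₄ * ε := by gcongr; rw [hC₄]; linarith
    by_cases hy2 : y + ε • v ∈ Ω
    · have h1 := hbar _ φ hφ sdiff_subset hφM _ hy2
      have h2 := hd.lip y hy _ hy2 (by rw [hdist]; exact hε1.le)
      rw [hdist] at h2
      have h4 : C₃ * (-f (y + ε • v)) ≤ C₃ * (L * ε) := by gcongr
      linarith
    · rw [hφ.zero _ fun h => hy2 h.1]
      have : 0 < C₃ * L * ε := by positivity
      linarith
  have hhole : ∀ y ∈ holes n ε (aStar n ε), φ (y + ε • v) - φ y < C₄ * ε := by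
    intro y hy
    rw [hφ.zero _ fun h => h.2 (hper y hy)]
    have h3 := hφ.nonneg y
    have : 0 < C₄ * ε := by positivity
    linarith
  suffices hmain : φ (x + ε • v) - φ x ≤ C₄ * ε * CH by
    have e : C₄ * CH * ε = C₄ * ε * CH := by ring
    rw [add_mul]; linarith
  set D := Ω \ holes n ε (aStar n ε) with hD
  set w : Eucl n → ℝ := fun y => φ (y + ε • v) - φ y with hw
  have hwc : Continuous w := (hφ.cont.comp (continuous_id.add continuous_const)).sub hφ.cont
  set h : Eucl n → ℝ := fun y => 1 + Real.sqrt (-f y) + Gf n ε y with hh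
  set H : Eucl n → ℝ := fun y => K * φ y + h y with hH
  have hSpos : ∀ y ∈ D, 0 < Sf n ε y := fun y hy =>
    lt_of_lt_of_le (by positivity) (Sf_ge hε0 ha hy.2)
  have hh1 : ∀ y ∈ D, 1 ≤ h y := by
    intro y hy
    have := Real.sqrt_nonneg (-f y)
    have := hG1 y (hSpos y hy)
    simp only [hh]; linarith
  have hhC : ∀ y ∈ D, h y ≤ Ch := by
    intro y hy
    have := Real.sqrt_le_sqrt (hd.le_Dm y (subset_closure hy.1))
    have := hG3 y hy.2
    simp only [hh]; rw [hCh]; linarith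
  have hH1 : ∀ y ∈ D, 1 ≤ H y := by
    intro y hy
    have := hh1 y hy
    have : 0 ≤ K * φ y := mul_nonneg hK.le (hφ.nonneg y)
    simp only [hH]; linarith
  have hHC : ∀ y ∈ D, H y ≤ CH := by
    intro y hy
    have := hhC y hy
    have : K * φ y ≤ K * M := by gcongr; exact hφM y
    simp only [hH]; rw [hCH]; linarith
  have hhcd : ∀ y ∈ D, ContDiffAt ℝ 2 h y := by
    intro y hy
    have h1 : ContDiffAt ℝ 2 (fun y => Real.sqrt (-f y)) y :=
      hd.cd.contDiffAt.neg.sqrt (by have := (hd.mem y).1 hy.1; linarith)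
    exact (contDiffAt_const.add h1).add (Gf_contDiffAt (hSpos y hy))
  have hHcd : ∀ y ∈ D, ContDiffAt ℝ 2 H y := fun y hy =>
    (contDiffAt_const.mul (hφ.cd y hy)).add (hhcd y hy)
  -- the compact set where `w` is large
  set E : Set (Eucl n) := closure Ω ∩ {y | C₄ * ε ≤ w y} with hE
  have hEc : IsCompact E := hd.cpt.inter_right (isClosed_le continuous_const hwc)
  have hED : E ⊆ D := by
    intro y hy
    have hy2 : C₄ * ε ≤ w y := hy.2
    refine ⟨?_, ?_⟩
    · by_contra h; exact absurd (hout y h) (not_lt.2 hy2)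
    · intro h; exact absurd (hhole y h) (not_lt.2 hy2)
  have hbase : C₄ * ε ≤ C₄ * ε * CH := le_mul_of_one_le_right (by positivity) hCH1
  by_contra! hcon
  have hxE : x ∈ E := by
    have h1 : C₄ * ε ≤ w x := by simp only [hw]; linarith
    refine ⟨?_, h1⟩
    by_contra hx
    exact absurd (hout x fun h => hx (subset_closure h)) (not_lt.2 h1)
  obtain ⟨x₀, hx₀, hmax⟩ := hEc.exists_isMaxOn ⟨x, hxE⟩ (f := fun y => w y / H y)
    (fun y hy => ((hwc.continuousAt).div (hHcd y (hED hy)).continuousAt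
      (by have := hH1 y (hED hy); linarith)).continuousWithinAt)
  have hx₀D : x₀ ∈ D := hED hx₀
  obtain ⟨μ, hμ⟩ : ∃ μ, μ = w x₀ / H x₀ := ⟨_, rfl⟩
  have hHx₀ : 1 ≤ H x₀ := hH1 x₀ hx₀D
  have hHx : 1 ≤ H x := hH1 x (hED hxE)
  have hμ1 : C₄ * ε < μ := by
    have h1 : w x / H x ≤ μ := by rw [hμ]; exact hmax hxE
    refine lt_of_lt_of_le ?_ h1
    rw [lt_div_iff₀ (by linarith)]
    have : C₄ * ε * H x ≤ C₄ * ε * CH := by gcongr; exact hHC x (hED hxE)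
    simp only [hw]; linarith
  have hμpos : 0 < μ := lt_trans (by positivity) hμ1
  have hwμ : w x₀ = μ * H x₀ := by rw [hμ]; field_simp
  have hall : ∀ y ∈ D, w y ≤ μ * H y := by
    intro y hy
    have h1 := hH1 y hy
    by_cases hyE : y ∈ E
    · have h2 : w y / H y ≤ μ := by rw [hμ]; exact hmax hyE
      rwa [div_le_iff₀ (by linarith)] at h2
    · have h2 : w y < C₄ * ε := by
        by_contra! h3; exact hyE ⟨subset_closure hy.1, h3⟩
      nlinarith
  have hloc : IsLocalMax (fun y => w y - μ * H y) x₀ := by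
    filter_upwards [hφ.opn.mem_nhds hx₀D] with y hy
    have := hall y hy
    linarith
  have hwε : ε ≤ w x₀ := by
    have : C₄ * ε ≤ w x₀ := hx₀.2
    nlinarith
  have hy₀φ : φ (x₀ + ε • v) = φ x₀ + w x₀ := by simp only [hw]; ring
  have hφx₀ : 0 < φ x₀ := hφ.pos x₀ hx₀D
  have hy₀D : x₀ + ε • v ∈ D := hφ.mem (by rw [hy₀φ]; linarith)
  have hcdt : ContDiffAt ℝ 2 (fun y => φ (y + ε • v)) x₀ :=
    ContDiffAt.comp x₀ (hφ.cd _ hy₀D) (contDiffAt_id.add contDiffAt_const)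
  have htouch := lap_le_of_touch (hcdt.sub (hφ.cd _ hx₀D))
    (contDiffAt_const.mul (hHcd x₀ hx₀D)) hloc
  rw [lap_sub hcdt (hφ.cd _ hx₀D), lap_translate, hφ.eq _ hy₀D, hφ.eq _ hx₀D,
    lap_const_mul _ (hHcd x₀ hx₀D), hH,
    lap_add (contDiffAt_const.mul (hφ.cd _ hx₀D)) (hhcd x₀ hx₀D),
    lap_const_mul _ (hφ.cd _ hx₀D), hφ.eq _ hx₀D] at htouch
  have hfx : f x₀ < 0 := (hd.mem x₀).1 hx₀D.1
  obtain ⟨s, hs⟩ : ∃ s, s = (Real.sqrt (-f x₀))⁻¹ := ⟨_, rfl⟩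
  have hsq : 0 < Real.sqrt (-f x₀) := Real.sqrt_pos.2 (by linarith)
  have hspos : 0 < s := by rw [hs]; positivity
  have hsd : s ^ 2 * (-f x₀) = 1 := by
    rw [hs, inv_pow, Real.sq_sqrt (by linarith)]
    exact inv_mul_cancel₀ (by linarith)
  obtain ⟨hsc, hsl⟩ := sqrt_barrier hd hx₀D.1 hspos hsd
  have hlaph : lap h x₀ ≤ ((1 / 4 + Lf / 2) * s - c₀ / 2 * s ^ 3) +
      (C₂ - c₂ * (Gf n ε x₀ / ε ^ 2)) := by
    have h1 := hG4 x₀ (hSpos x₀ hx₀D)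
    rw [hh, lap_add (contDiffAt_const.add hsc) (Gf_contDiffAt (hSpos x₀ hx₀D)),
      lap_add contDiffAt_const hsc, lap_const]
    linarith
  have hor : θ * (-f x₀) ≤ Gf n ε x₀ ∨ t * (-f x₀ / 2) ^ (1 / (1 - p)) ≤ φ x₀ := by
    rcases le_or_gt (θ * (-f x₀)) (Gf n ε x₀) with h1 | h1
    · exact Or.inl h1
    · exact Or.inr (hlow ε hε φ hφ x₀ hx₀D h1)
  have hfin := hnum ε ⟨hε0, hεε⟩ s (-f x₀) (Gf n ε x₀) (φ x₀) (h x₀) (w x₀) hspos hsd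
    (hG1 x₀ (hSpos x₀ hx₀D)) hφx₀ (hφM x₀) (by have := hh1 x₀ hx₀D; linarith) (hhC x₀ hx₀D)
    hwε hor
  rw [hy₀φ] at htouch
  have hHe : H x₀ = K * φ x₀ + h x₀ := rfl
  rw [← hHe] at hfin
  have h6 : μ * (K * φ x₀ ^ p - lap h x₀) ≤ (φ x₀ + w x₀) ^ p - φ x₀ ^ p := by
    rw [mul_sub]
    rw [mul_add, mul_neg, mul_neg] at htouch
    linarith
  have hHpos : 0 < H x₀ := by linarith
  have h7 := mul_le_mul_of_nonneg_right h6 hHpos.le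
  have hwpos : 0 ≤ w x₀ := by linarith
  have h8 : w x₀ * (K * φ x₀ ^ p + (c₀ / 2 * s ^ 3 - (1 / 4 + Lf / 2) * s) +
      (c₂ * (Gf n ε x₀ / ε ^ 2) - C₂)) ≤ w x₀ * (K * φ x₀ ^ p - lap h x₀) := by
    gcongr; linarith
  have h9 : w x₀ * (K * φ x₀ ^ p - lap h x₀) = μ * (K * φ x₀ ^ p - lap h x₀) * H x₀ := by
    rw [hwμ]; ring
  linarith

lemma holes_shift {n : ℕ} {ε a : ℝ} {v : Eucl n} (hv : v ∈ latticePts n 1) :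
    ∀ x ∈ holes n ε a, x + ε • v ∈ holes n ε a := by
  intro x hx
  obtain ⟨m, hm, hxm⟩ := mem_iUnion₂.1 hx
  refine mem_iUnion₂.2 ⟨m + ε • v, ?_, ?_⟩
  · intro i
    obtain ⟨z, hz⟩ := hm i
    obtain ⟨z', hz'⟩ := hv i
    refine ⟨z + z', ?_⟩
    simp only [PiLp.add_apply, PiLp.smul_apply, smul_eq_mul, hz, hz']
    push_cast; ring
  · rw [mem_closedBall, dist_add_right]; exact hxm

lemma single_mem_lattice {n : ℕ} (i : Fin n) :
    (EuclideanSpace.single i 1 : Eucl n) ∈ latticePts n 1 := by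
  intro j
  by_cases h : j = i
  · exact ⟨1, by simp [h]⟩
  · exact ⟨0, by simp [h]⟩

lemma neg_single_mem_lattice {n : ℕ} (i : Fin n) :
    (-EuclideanSpace.single i 1 : Eucl n) ∈ latticePts n 1 := by
  intro j
  by_cases h : j = i
  · exact ⟨-1, by simp [h]⟩
  · exact ⟨0, by simp [h]⟩

/-- uniform bound of the discrete gradient of the eigenfunctions φ_ε on
all of Ω̄: ‖Δ^ε_e φ_ε(x)‖² ≤ C with C independent of ε. -/
theorem ev_discrete_gradient_bound
    (n : ℕ) (hn : 3 ≤ n)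
    (Ω : Set (Eucl n)) (hΩo : IsOpen Ω) (hΩb : Bornology.IsBounded Ω)
    (hΩc : IsConnected Ω) (hΩs : HasSmoothBoundary Ω)
    (p : ℝ) (hp0 : 0 < p) (hp1 : p < 1)
    (Φ : ℝ → Eucl n → ℝ)
    (hΦ : ∀ ε ∈ Ioo (0:ℝ) 1, IsEVSol n Ω ε (aStar n ε) p (Φ ε))
    :
    ∃ C > (0:ℝ), ∀ ε ∈ Ioo (0:ℝ) 1, ∀ x ∈ closure Ω,
      dgradNorm ε (Φ ε) x ^ 2 ≤ C := by
  obtain ⟨f, R, c₀, Lf, Dm, L, hd⟩ := exists_dom hΩo hΩb hΩc.nonempty hΩs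
  obtain ⟨C, hC, hbd⟩ := exists_diff_bound hn hd hp0 hp1
  refine ⟨n * C ^ 2, ?_, ?_⟩
  · have : (0:ℝ) < n := by exact_mod_cast (by omega : 0 < n)
    positivity
  intro ε hε x _
  have hε0 : 0 < ε := hε.1
  have hsol := (hΦ ε hε).sol hΩo hε0 (Real.rpow_pos_of_pos hε0 _).le
  have hq : ∀ i : Fin n, dquot ε (EuclideanSpace.single i 1) (Φ ε) x ^ 2 ≤ C ^ 2 := by
    intro i
    have h1 := hbd ε hε (EuclideanSpace.single i 1) (by simp)
      (holes_shift (single_mem_lattice i)) _ hsol x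
    have h2 := hbd ε hε (-EuclideanSpace.single i 1) (by simp)
      (holes_shift (neg_single_mem_lattice i)) _ hsol (x + ε • EuclideanSpace.single i 1)
    rw [smul_neg, add_neg_cancel_right] at h2
    rw [← sq_abs]
    have h3 : |dquot ε (EuclideanSpace.single i 1) (Φ ε) x| ≤ C := by
      unfold dquot
      rw [abs_div, abs_of_pos hε0, div_le_iff₀ hε0, abs_le]
      constructor <;> linarith
    gcongr
  unfold dgradNorm
  rw [Real.sq_sqrt (Finset.sum_nonneg fun _ _ => sq_nonneg _)]
  calc ∑ i, dquot ε (EuclideanSpace.single i 1) (Φ ε) x ^ 2 ≤ ∑ _i : Fin n, C ^ 2 :=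
        Finset.sum_le_sum fun i _ => hq i
    _ = n * C ^ 2 := by simp
end
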